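/- arXiv:0711.0013 — 2 statements merged into one kernel-verified Lean document; each statement's English description precedes it below -/
import Mathlib

section
/- A family of logarithmic Sobolev inequalities on the hyperbolic plane (Theorem 4.1, inequality (3.9)): Let k > 1 be a real number. Let f : D → [0,∞) be bounded with lim_{|ζ|→1} f(ζ) = 0, weakly differentiable with ∫_D |∇f|² dA < ∞, normalized so that ∫_D f² dμ = 1, and with ∫_D f² |ln f| dμ < ∞. Then ∫_D f(ζ)² ln(f(ζ)²) dμ(ζ) ≤ 2k·ln((k−1)/k) + ln((k−1)/(2π)) + ((2k+1)/(k(k−1))) · ∫_D |∇f|² dA. -/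
open MeasureTheory Metric

/-- The hyperbolic area measure `μ` on the unit disc `D ⊆ ℂ`, with density
`4(1−|ζ|²)^{−2}` with respect to Lebesgue measure (Poincaré metric). -/
noncomputable def muDisc : Measure ℂ :=
  (volume.restrict (ball (0 : ℂ) 1)).withDensity
    (fun ζ => ENNReal.ofReal (4 * ((1 - ‖ζ‖ ^ 2) ^ 2)⁻¹))

noncomputable def gd (b y : ℝ) : ℝ := (√(2 * Real.pi * b))⁻¹ * Real.exp (-(1 / (2 * b)) * y ^ 2)

lemma gd_pos {b : ℝ} (hb : 0 < b) (y : ℝ) : 0 < gd b y := by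
  unfold gd; have := Real.pi_pos; positivity

lemma gd_cont (b : ℝ) : Continuous (gd b) := by
  unfold gd; fun_prop

lemma log_gd {b : ℝ} (hb : 0 < b) (y : ℝ) :
    Real.log (gd b y) = - (Real.log (2 * Real.pi * b) / 2) - y ^ 2 / (2 * b) := by
  have := Real.pi_pos
  unfold gd
  rw [Real.log_mul (by positivity) (by positivity), Real.log_exp, Real.log_inv, Real.log_sqrt (by positivity)]
  ring

lemma gd_integral {b : ℝ} (hb : 0 < b) : ∫ x in Set.Ioi (0:ℝ), gd b x = 1 / 2 := by
  have := Real.pi_pos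
  unfold gd
  rw [integral_const_mul, integral_gaussian_Ioi]
  have : Real.pi / (1 / (2 * b)) = 2 * Real.pi * b := by field_simp
  rw [this]
  have : √(2 * Real.pi * b) ≠ 0 := by positivity
  field_simp

lemma quantile {b : ℝ} (hb : 0 < b) : ∃ Q : ℝ → ℝ, Q (1/2) = 0 ∧
    ∀ u ∈ Set.Ioo (0:ℝ) 1, HasDerivAt Q (gd b (Q u))⁻¹ u := by
  set Φ : ℝ → ℝ := fun x => 1/2 + ∫ t in (0:ℝ)..x, gd b t with hΦ
  have hd : ∀ x, HasStrictDerivAt Φ (gd b x) x := by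
    intro x
    have := intervalIntegral.integral_hasStrictDerivAt_right
      ((gd_cont b).intervalIntegrable 0 x) ((gd_cont b).stronglyMeasurableAtFilter volume (nhds x))
      (gd_cont b).continuousAt
    exact this.const_add _
  have hmono : StrictMono Φ := by
    apply strictMono_of_deriv_pos
    intro x
    rw [(hd x).hasDerivAt.deriv]; exact gd_pos hb x
  have hcont : Continuous Φ := continuous_iff_continuousAt.2 fun x => (hd x).hasDerivAt.continuousAt
  have htop : Filter.Tendsto Φ Filter.atTop (nhds 1) := by
    have hi : IntegrableOn (gd b) (Set.Ioi 0) := by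
      unfold gd
      exact ((integrable_exp_neg_mul_sq (by positivity : 0 < 1 / (2*b))).const_mul _).integrableOn
    have := (intervalIntegral_tendsto_integral_Ioi 0 hi Filter.tendsto_id).const_add (1/2)
    rw [gd_integral hb] at this
    norm_num at this
    simpa [hΦ] using this
  have hneg : ∀ x, Φ (-x) = 1 - Φ x := by
    intro x
    simp only [hΦ]
    have h1 : ∫ t in (0:ℝ)..x, gd b (-t) = ∫ t in (-x)..(-0), gd b t := intervalIntegral.integral_comp_neg _
    have h2 : ∀ t, gd b (-t) = gd b t := by intro t; simp [gd]
    simp only [h2, neg_zero] at h1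
    rw [intervalIntegral.integral_symm, ← h1]; ring
  have hsurj : ∀ u ∈ Set.Ioo (0:ℝ) 1, ∃ x, Φ x = u := by
    rintro u ⟨h0, h1⟩
    obtain ⟨x, hx⟩ := (htop.eventually (lt_mem_nhds h1)).exists
    obtain ⟨y, hy⟩ := (htop.eventually (lt_mem_nhds (by linarith : 1 - u < 1))).exists
    exact mem_range_of_exists_le_of_exists_ge hcont ⟨-y, by rw [hneg]; linarith⟩ ⟨x, hx.le⟩
  have hQ : ∀ x, Function.invFun Φ (Φ x) = x := Function.leftInverse_invFun hmono.injective
  refine ⟨Function.invFun Φ, ?_, ?_⟩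
  · have : Φ 0 = 1/2 := by simp [hΦ]
    rw [← this, hQ]
  · intro u hu
    obtain ⟨x, rfl⟩ := hsurj u hu
    rw [hQ]
    exact ((hd x).to_local_left_inverse (gd_pos hb x).ne' (Filter.Eventually.of_forall hQ)).hasDerivAt

/-- one-dimensional (regularised) transport to a Gaussian -/
lemma transport {b L η : ℝ} (hb : 0 < b) (hL : 0 < L) (hη : 0 < η) (p : ℝ → ℝ) (hp : Continuous p)
    (hp0 : ∀ x, 0 ≤ p x) (hp1 : ∫ x in (-L)..L, p x = 1) :
    ∃ S S' : ℝ → ℝ, (∀ x ∈ Set.Icc (-L) L, HasDerivAt S (S' x) x) ∧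
      ContinuousOn S' (Set.Icc (-L) L) ∧
      (∀ x ∈ Set.Icc (-L) L, 0 < p x → 0 < S' x ∧
        Real.log (p x) = η - Real.log (2 * Real.pi * b) / 2 - S x ^ 2 / (2 * b) + Real.log (S' x)) ∧
      (∀ x ∈ Set.Icc (-L) L, 0 ≤ S' x) ∧
      ((∫ x in (-L)..0, p x) = 1 / 2 → ∀ x ∈ Set.Icc (-L) L, 0 ≤ S x * x) := by
  obtain ⟨Q, hQ0, hQ⟩ := quantile hb
  set e := Real.exp (-η) with he
  have he0 : 0 < e := Real.exp_pos _
  have he1 : e < 1 := by rw [he, Real.exp_lt_one_iff]; linarith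
  set N : ℝ → ℝ := fun x => (1 - e) / 2 + e * ∫ t in (-L)..x, p t with hN
  have hNd : ∀ x, HasDerivAt N (e * p x) x := by
    intro x
    have := intervalIntegral.integral_hasDerivAt_right
      (hp.intervalIntegrable (-L) x) (hp.stronglyMeasurableAtFilter volume (nhds x))
      hp.continuousAt
    exact (this.const_mul e).const_add _
  have hNmono : Monotone N := by
    apply monotone_of_deriv_nonneg (fun x => (hNd x).differentiableAt)
    intro x; rw [(hNd x).deriv]; exact mul_nonneg he0.le (hp0 x)
  have hNL : N (-L) = (1 - e)/2 := by simp [hN]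
  have hNR : N L = (1 + e)/2 := by simp only [hN, hp1]; ring
  have hN01 : ∀ x ∈ Set.Icc (-L) L, N x ∈ Set.Ioo (0:ℝ) 1 := by
    intro x hx
    have h1 := hNmono hx.1
    have h2 := hNmono hx.2
    rw [hNL] at h1; rw [hNR] at h2
    constructor <;> linarith
  have hSd : ∀ x ∈ Set.Icc (-L) L, HasDerivAt (fun x => Q (N x)) ((gd b (Q (N x)))⁻¹ * (e * p x)) x :=
    fun x hx => (hQ _ (hN01 x hx)).comp x (hNd x)
  have hS0 : ∀ x ∈ Set.Icc (-L) L, 0 ≤ (gd b (Q (N x)))⁻¹ * (e * p x) := fun x hx =>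
    mul_nonneg (inv_nonneg.2 (gd_pos hb _).le) (mul_nonneg he0.le (hp0 x))
  have hSc : ContinuousOn (fun x => Q (N x)) (Set.Icc (-L) L) := fun x hx =>
    (hSd x hx).continuousAt.continuousWithinAt
  refine ⟨fun x => Q (N x), fun x => (gd b (Q (N x)))⁻¹ * (e * p x), hSd, ?_, ?_, hS0, ?_⟩
  · apply ContinuousOn.mul
    · exact ((gd_cont b).comp_continuousOn hSc).inv₀ (fun x _ => (gd_pos hb _).ne')
    · exact (hp.const_mul e |>.continuousOn)
  · intro x hx hpx
    have hg := gd_pos hb (Q (N x))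
    refine ⟨by positivity, ?_⟩
    show Real.log (p x) = η - Real.log (2 * Real.pi * b) / 2 - Q (N x) ^ 2 / (2 * b)
      + Real.log ((gd b (Q (N x)))⁻¹ * (e * p x))
    rw [Real.log_mul (x := (gd b (Q (N x)))⁻¹) (by positivity) (by positivity), Real.log_inv, log_gd hb,
      Real.log_mul he0.ne' hpx.ne', he, Real.log_exp]
    ring
  · intro hmed x hx
    have hz : (0:ℝ) ∈ Set.Icc (-L) L := ⟨by linarith, hL.le⟩
    have hS00 : Q (N 0) = 0 := by
      have : N 0 = 1/2 := by simp only [hN, hmed]; ring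
      rw [this, hQ0]
    have hmon : MonotoneOn (fun x => Q (N x)) (Set.Icc (-L) L) := by
      apply monotoneOn_of_deriv_nonneg (convex_Icc _ _) hSc
      · intro y hy; exact (hSd y (interior_subset hy)).differentiableAt.differentiableWithinAt
      · intro y hy; rw [(hSd y (interior_subset hy)).deriv]; exact hS0 y (interior_subset hy)
    rcases le_total 0 x with h | h
    · have := hmon hz hx h
      simp only [hS00] at this
      exact mul_nonneg this h
    · have := hmon hx hz h
      simp only [hS00] at this
      exact mul_nonneg_of_nonpos_of_nonpos this h

/-- fibre integration by parts -/
lemma fibre {b L : ℝ} (hb : 0 < b) (hL : 0 < L) (h h' V V' : ℝ → ℝ)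
    (hh : ∀ x, HasDerivAt h (h' x) x) (h1 : h (-L) = 0) (h2 : h L = 0)
    (hFint : IntervalIntegrable (fun x => h' x ^ 2) volume (-L) L)
    (hV : ∀ x ∈ Set.Icc (-L) L, HasDerivAt V (V' x) x) (hVc : ContinuousOn V' (Set.Icc (-L) L)) :
    ∫ x in (-L)..L, h x ^ 2 * V' x ≤
      2 * b * (∫ x in (-L)..L, h' x ^ 2) + ∫ x in (-L)..L, h x ^ 2 * V x ^ 2 / (2 * b) := by
  have hle : -L ≤ L := by linarith
  have hu : Set.uIcc (-L) L = Set.Icc (-L) L := Set.uIcc_of_le hle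
  have hhc : Continuous h := continuous_iff_continuousAt.2 fun x => (hh x).continuousAt
  have hVc0 : ContinuousOn V (Set.Icc (-L) L) := fun x hx => (hV x hx).continuousAt.continuousWithinAt
  have hmeas : Measurable h' := by
    have : h' = deriv h := by ext x; exact (hh x).deriv.symm
    rw [this]; exact measurable_deriv h
  have hint1 : IntervalIntegrable h' volume (-L) L := by
    have hc : IntervalIntegrable (fun x => (1:ℝ) + h' x ^ 2) volume (-L) L :=
      intervalIntegrable_const.add hFint
    refine hc.mono_fun hmeas.aestronglyMeasurable (Filter.Eventually.of_forall fun x => ?_)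
    simp only [Real.norm_eq_abs]
    rw [abs_of_nonneg (by positivity : (0:ℝ) ≤ 1 + h' x ^ 2)]
    nlinarith [sq_nonneg (|h' x| - 1), sq_abs (h' x), abs_nonneg (h' x)]
  have i1 : IntervalIntegrable (fun x => h x ^ 2 * V' x) volume (-L) L := by
    apply ContinuousOn.intervalIntegrable; rw [hu]
    exact (hhc.pow 2).continuousOn.mul hVc
  have i2 : IntervalIntegrable (fun x => h' x * (2 * h x * V x)) volume (-L) L := by
    apply hint1.mul_continuousOn; rw [hu]
    exact (by fun_prop : Continuous fun x => 2 * h x).continuousOn.mul hVc0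
  have i3 : IntervalIntegrable (fun x => h x ^ 2 * V x ^ 2 / (2*b)) volume (-L) L := by
    apply ContinuousOn.intervalIntegrable; rw [hu]
    exact ((hhc.pow 2).continuousOn.mul (hVc0.pow 2)).div_const _
  have ftc : ∫ x in (-L)..L, (h' x * (2 * h x * V x) + h x ^ 2 * V' x) = 0 := by
    have := intervalIntegral.integral_eq_sub_of_hasDerivAt (f := fun x => h x ^ 2 * V x)
      (f' := fun x => h' x * (2 * h x * V x) + h x ^ 2 * V' x) (a := -L) (b := L) ?_ (i2.add i1)
    · rw [this, h1, h2]; ring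
    · intro x hx
      rw [hu] at hx
      have := (((hh x).pow 2).mul (hV x hx)).congr_deriv
        (g' := h' x * (2 * h x * V x) + h x ^ 2 * V' x)
        (by simp only [Pi.pow_apply]; push_cast; ring)
      exact this
  rw [intervalIntegral.integral_add i2 i1] at ftc
  have : ∫ x in (-L)..L, h x ^ 2 * V' x = ∫ x in (-L)..L, - (h' x * (2 * h x * V x)) := by
    rw [intervalIntegral.integral_neg]; linarith
  rw [this, ← intervalIntegral.integral_const_mul, ← intervalIntegral.integral_add (hFint.const_mul _) i3]
  apply intervalIntegral.integral_mono_on hle i2.neg ((hFint.const_mul _).add i3)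
  intro x _
  have : 2 * b * h' x ^ 2 + h x ^ 2 * V x ^ 2 / (2 * b) + (h' x * (2 * h x * V x))
      = (2 * b * h' x + h x * V x) ^ 2 / (2 * b) := by field_simp; ring
  have h3 : 0 ≤ (2 * b * h' x + h x * V x) ^ 2 / (2 * b) := by positivity
  simp only [Pi.neg_apply]
  linarith

lemma xlogx_cont : Continuous fun x : ℝ => x * Real.log x := Real.continuous_mul_log

/-- one-dimensional logarithmic Sobolev inequality -/
lemma logsob1 {b L : ℝ} (hb : 0 < b) (hL : 0 < L) (h h' : ℝ → ℝ)
    (hh : ∀ x, HasDerivAt h (h' x) x) (h1 : h (-L) = 0) (h2 : h L = 0)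
    (hFint : IntervalIntegrable (fun x => h' x ^ 2) volume (-L) L) :
    ∫ x in (-L)..L, h x ^ 2 * Real.log (h x ^ 2) ≤
      (∫ x in (-L)..L, h x ^ 2) * Real.log (∫ x in (-L)..L, h x ^ 2)
      + 2 * b * (∫ x in (-L)..L, h' x ^ 2)
      - (∫ x in (-L)..L, h x ^ 2) * (1 + Real.log (2 * Real.pi * b) / 2) := by
  have hle : -L ≤ L := by linarith
  have hu : Set.uIcc (-L) L = Set.Icc (-L) L := Set.uIcc_of_le hle
  have hhc : Continuous h := continuous_iff_continuousAt.2 fun x => (hh x).continuousAt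
  set m := ∫ x in (-L)..L, h x ^ 2 with hm
  have hm0 : 0 ≤ m := intervalIntegral.integral_nonneg hle fun x _ => sq_nonneg _
  have hE : 0 ≤ ∫ x in (-L)..L, h' x ^ 2 := intervalIntegral.integral_nonneg hle fun x _ => sq_nonneg _
  rcases hm0.eq_or_lt with hz | hpos
  · have hz0 : ∀ x ∈ Set.Icc (-L) L, h x ^ 2 = 0 := by
      intro x hx
      by_contra hne
      have := intervalIntegral.integral_pos (by linarith : -L < L) (f := fun x => h x ^ 2)
        (hhc.pow 2).continuousOn (fun x _ => sq_nonneg _) ⟨x, hx, lt_of_le_of_ne (sq_nonneg _) (Ne.symm hne)⟩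
      linarith
    have : ∫ x in (-L)..L, h x ^ 2 * Real.log (h x ^ 2) = ∫ x in (-L)..L, (0:ℝ) := by
      apply intervalIntegral.integral_congr
      intro x hx
      rw [hu] at hx
      simp [hz0 x hx]
    rw [this, ← hz]; simp; positivity
  · apply le_of_forall_pos_le_add
    intro η' hη'
    set η := η' / m with hηdef
    have hη : 0 < η := by positivity
    obtain ⟨S, S', hS, hSc', hlog, hS0, -⟩ := transport hb hL hη (fun x => h x ^ 2 / m)
      ((hhc.pow 2).div_const _) (fun x => by positivity)
      (by rw [intervalIntegral.integral_div, ← hm]; field_simp)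
    have hSc : ContinuousOn S (Set.Icc (-L) L) := fun x hx => (hS x hx).continuousAt.continuousWithinAt
    have hf := fibre hb hL h h' S S' hh h1 h2 hFint hS hSc'
    set K := Real.log m + η - Real.log (2 * Real.pi * b) / 2 - 1 with hK
    have hhi : IntervalIntegrable (fun x => h x ^ 2) volume (-L) L := (hhc.pow 2).intervalIntegrable _ _
    have j1 : IntervalIntegrable (fun x => h x ^ 2 * Real.log (h x ^ 2)) volume (-L) L :=
      (xlogx_cont.comp (hhc.pow 2)).intervalIntegrable _ _
    have j2 : IntervalIntegrable (fun x => h x ^ 2 * S x ^ 2 / (2 * b)) volume (-L) L := by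
      apply ContinuousOn.intervalIntegrable; rw [hu]
      exact ((hhc.pow 2).continuousOn.mul (hSc.pow 2)).div_const _
    have j3 : IntervalIntegrable (fun x => h x ^ 2 * S' x) volume (-L) L := by
      apply ContinuousOn.intervalIntegrable; rw [hu]
      exact (hhc.pow 2).continuousOn.mul hSc'
    have hpt : ∫ x in (-L)..L, h x ^ 2 * Real.log (h x ^ 2) ≤
        ∫ x in (-L)..L, (h x ^ 2 * K - h x ^ 2 * S x ^ 2 / (2 * b) + h x ^ 2 * S' x) := by
      apply intervalIntegral.integral_mono_on hle j1 (((hhi.mul_const K).sub j2).add j3)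
      intro x hx
      rcases eq_or_ne (h x) 0 with h0 | h0
      · simp [h0]
      · have hsq : 0 < h x ^ 2 := by positivity
        obtain ⟨hSp, hl⟩ := hlog x hx (by positivity)
        rw [Real.log_div hsq.ne' hpos.ne'] at hl
        have := Real.log_le_sub_one_of_pos hSp
        have h5 : Real.log (h x ^ 2) ≤ K - S x ^ 2 / (2 * b) + S' x := by rw [hK]; linarith
        calc h x ^ 2 * Real.log (h x ^ 2) ≤ h x ^ 2 * (K - S x ^ 2 / (2 * b) + S' x) :=
              mul_le_mul_of_nonneg_left h5 hsq.le
          _ = _ := by ring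
    rw [intervalIntegral.integral_add ((hhi.mul_const K).sub j2) j3,
      intervalIntegral.integral_sub (hhi.mul_const K) j2, intervalIntegral.integral_mul_const, ← hm] at hpt
    have : m * K = m * Real.log m - m * (1 + Real.log (2 * Real.pi * b) / 2) + η' := by
      rw [hK, hηdef]; field_simp; ring
    linarith

lemma swap_int {R Θ : ℝ} (F : ℝ → ℝ → ℝ) (hF : Continuous (Function.uncurry F)) (hΘ : 0 < Θ) (hR : 0 < R)
    (W : ℝ → ℝ) (hW : ContinuousOn W (Set.Icc (-Θ) Θ)) :
    ∫ θ in (-Θ)..Θ, (∫ s in (-R)..R, F s θ ^ 2) * W θ =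
      ∫ s in (-R)..R, ∫ θ in (-Θ)..Θ, F s θ ^ 2 * W θ := by
  have hR' : -R ≤ R := by linarith
  have hT' : -Θ ≤ Θ := by linarith
  simp_rw [← intervalIntegral.integral_mul_const]
  simp only [intervalIntegral.integral_of_le hR', intervalIntegral.integral_of_le hT']
  apply integral_integral_swap
  rw [Measure.prod_restrict]
  have : IntegrableOn (fun z : ℝ × ℝ => F z.2 z.1 ^ 2 * W z.1) (Set.Icc (-Θ) Θ ×ˢ Set.Icc (-R) R) := by
    apply ContinuousOn.integrableOn_compact (isCompact_Icc.prod isCompact_Icc)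
    apply ContinuousOn.mul
    · have : Continuous fun z : ℝ × ℝ => F z.2 z.1 := hF.comp continuous_swap
      exact (this.pow 2).continuousOn
    · exact hW.comp continuousOn_fst (fun z hz => hz.1)
  exact this.mono_set (Set.prod_mono Set.Ioc_subset_Icc_self Set.Ioc_subset_Icc_self)

lemma fibre2 {b R Θ : ℝ} (hb : 0 < b) (hΘ : 0 < Θ) (hR : 0 < R) (F Ft : ℝ → ℝ → ℝ)
    (hF : Continuous (Function.uncurry F))
    (hFt : ∀ s θ, HasDerivAt (F s) (Ft s θ) θ) (h1 : ∀ s, F s (-Θ) = 0) (h2 : ∀ s, F s Θ = 0)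
    (hFint : Integrable (fun z : ℝ × ℝ => Ft z.1 z.2 ^ 2)
      ((volume.restrict (Set.Ioc (-R) R)).prod (volume.restrict (Set.Ioc (-Θ) Θ))))
    (V V' : ℝ → ℝ)
    (hV : ∀ x ∈ Set.Icc (-Θ) Θ, HasDerivAt V (V' x) x) (hVc : ContinuousOn V' (Set.Icc (-Θ) Θ)) :
    ∫ θ in (-Θ)..Θ, (∫ s in (-R)..R, F s θ ^ 2) * V' θ ≤
      2 * b * (∫ z, Ft z.1 z.2 ^ 2
        ∂((volume.restrict (Set.Ioc (-R) R)).prod (volume.restrict (Set.Ioc (-Θ) Θ))))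
      + ∫ θ in (-Θ)..Θ, (∫ s in (-R)..R, F s θ ^ 2) * (V θ ^ 2 / (2 * b)) := by
  have hR' : -R ≤ R := by linarith
  have hT' : -Θ ≤ Θ := by linarith
  have hVc0 : ContinuousOn V (Set.Icc (-Θ) Θ) := fun x hx => (hV x hx).continuousAt.continuousWithinAt
  have hW2 : ContinuousOn (fun θ => V θ ^ 2 / (2 * b)) (Set.Icc (-Θ) Θ) := (hVc0.pow 2).div_const _
  rw [swap_int F hF hΘ hR V' hVc, swap_int F hF hΘ hR _ hW2, integral_prod _ hFint]
  have hcont : ∀ W : ℝ → ℝ, ContinuousOn W (Set.Icc (-Θ) Θ) →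
      Integrable (fun s => ∫ θ in (-Θ)..Θ, F s θ ^ 2 * W θ) (volume.restrict (Set.Ioc (-R) R)) := by
    intro W hW
    have : IntegrableOn (fun z : ℝ × ℝ => F z.1 z.2 ^ 2 * W z.2) (Set.Icc (-R) R ×ˢ Set.Icc (-Θ) Θ) := by
      apply ContinuousOn.integrableOn_compact (isCompact_Icc.prod isCompact_Icc)
      apply ContinuousOn.mul
      · have : Continuous fun z : ℝ × ℝ => F z.1 z.2 := hF
        exact (this.pow 2).continuousOn
      · exact hW.comp continuousOn_snd (fun z hz => hz.2)
    have := this.mono_set (Set.prod_mono (Set.Ioc_subset_Icc_self (a := -R) (b := R))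
      (Set.Ioc_subset_Icc_self (a := -Θ) (b := Θ)))
    rw [IntegrableOn, Measure.volume_eq_prod, ← Measure.prod_restrict] at this
    simp only [intervalIntegral.integral_of_le hT']
    exact this.integral_prod_left
  simp only [intervalIntegral.integral_of_le hR']
  rw [← integral_const_mul, ← integral_add (hFint.integral_prod_left.const_mul _) (hcont _ hW2)]
  apply integral_mono_ae (hcont _ hVc) ((hFint.integral_prod_left.const_mul _).add (hcont _ hW2))
  filter_upwards [hFint.prod_right_ae] with s hs
  have hs' : IntervalIntegrable (fun x => Ft s x ^ 2) volume (-Θ) Θ := by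
    rw [intervalIntegrable_iff_integrableOn_Ioc_of_le hT']; exact hs
  have := fibre hb hΘ (F s) (Ft s) V V' (hFt s) (h1 s) (h2 s) hs' hV hVc
  simp only [Pi.add_apply]
  rw [← intervalIntegral.integral_of_le hT']
  simpa only [mul_div_assoc] using this

set_option maxHeartbeats 1000000 in
lemma theta {b c l G R Θ : ℝ} (hb : 0 < b) (hc : 0 ≤ c) (hl : 0 < l) (hΘ : 0 < Θ) (hΘ2 : Θ < Real.pi / 2)
    (hR : 0 < R)
    (hG : ∀ σ q : ℝ, σ ^ 2 ≤ 1 → 0 < q → q ≤ 1 →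
      G ≤ (1 - σ ^ 2) * (b / 2 - c * q ^ 2) + c * l / b * (1 - q)
        + Real.log (1 + c / l * σ ^ 2 * q ^ 2) - σ ^ 2 * c ^ 2 * q ^ 2 / (2 * b))
    (F Ft : ℝ → ℝ → ℝ)
    (hF : Continuous (Function.uncurry F))
    (hFt : ∀ s θ, HasDerivAt (F s) (Ft s θ) θ) (h1 : ∀ s, F s (-Θ) = 0) (h2 : ∀ s, F s Θ = 0)
    (hFint : Integrable (fun z : ℝ × ℝ => Ft z.1 z.2 ^ 2)
      ((volume.restrict (Set.Ioc (-R) R)).prod (volume.restrict (Set.Ioc (-Θ) Θ))))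
    (hm1 : ∫ θ in (-Θ)..Θ, (∫ s in (-R)..R, F s θ ^ 2) / Real.cos θ ^ 2 = 1)
    (hm2 : ∫ θ in (-Θ)..0, (∫ s in (-R)..R, F s θ ^ 2) / Real.cos θ ^ 2 = 1 / 2) :
    ∫ θ in (-Θ)..Θ, (∫ s in (-R)..R, F s θ ^ 2) / Real.cos θ ^ 2 *
      (Real.log ((∫ s in (-R)..R, F s θ ^ 2) / Real.cos θ ^ 2) + Real.log (Real.cos θ)) ≤
      2 * b * (∫ z, Ft z.1 z.2 ^ 2
        ∂((volume.restrict (Set.Ioc (-R) R)).prod (volume.restrict (Set.Ioc (-Θ) Θ))))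
      - 1 - Real.log (2 * Real.pi * b) / 2 - b / 2 - G := by
  have hT' : -Θ ≤ Θ := by linarith
  have hu : Set.uIcc (-Θ) Θ = Set.Icc (-Θ) Θ := Set.uIcc_of_le hT'
  have hcos : ∀ x ∈ Set.Icc (-Θ) Θ, 0 < Real.cos x := fun x hx =>
    Real.cos_pos_of_mem_Ioo ⟨by linarith [hx.1], by linarith [hx.2]⟩
  set m : ℝ → ℝ := fun θ => ∫ s in (-R)..R, F s θ ^ 2 with hm
  have hm0 : ∀ θ, 0 ≤ m θ := fun θ =>
    intervalIntegral.integral_nonneg (by linarith) fun x _ => sq_nonneg _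
  have hmc : Continuous m := by
    apply intervalIntegral.continuous_parametric_intervalIntegral_of_continuous' (f := fun θ s => F s θ ^ 2)
    have : Continuous fun z : ℝ × ℝ => F z.2 z.1 := hF.comp continuous_swap
    exact this.pow 2
  set cl : ℝ → ℝ := fun θ => max (-Θ) (min Θ θ) with hcl
  have hclm : ∀ θ, cl θ ∈ Set.Icc (-Θ) Θ := fun θ => ⟨le_max_left _ _, max_le hT' (min_le_left _ _)⟩
  have hcle : ∀ θ ∈ Set.Icc (-Θ) Θ, cl θ = θ := fun θ h => by
    simp only [hcl]; rw [min_eq_right h.2, max_eq_right h.1]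
  set p : ℝ → ℝ := fun θ => m θ / Real.cos (cl θ) ^ 2 with hp
  have hpe : ∀ θ ∈ Set.Icc (-Θ) Θ, p θ = m θ / Real.cos θ ^ 2 := fun θ h => by
    simp only [hp, hcle θ h]
  have hpc : Continuous p := by
    apply hmc.div
    · simp only [hcl]; fun_prop
    · intro x; exact pow_ne_zero 2 (hcos _ (hclm x)).ne'
  have hp0 : ∀ θ, 0 ≤ p θ := fun θ => div_nonneg (hm0 θ) (sq_nonneg _)
  have hp1 : ∫ θ in (-Θ)..Θ, p θ = 1 := by
    rw [← hm1]; apply intervalIntegral.integral_congr; intro x hx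
    rw [hu] at hx; exact hpe x hx
  have hp2 : ∫ θ in (-Θ)..0, p θ = 1 / 2 := by
    rw [← hm2]; apply intervalIntegral.integral_congr; intro x hx
    rw [Set.uIcc_of_le (by linarith)] at hx; exact hpe x ⟨hx.1, by linarith [hx.2]⟩
  have hLHS : ∫ θ in (-Θ)..Θ, m θ / Real.cos θ ^ 2 * (Real.log (m θ / Real.cos θ ^ 2) + Real.log (Real.cos θ))
      = ∫ θ in (-Θ)..Θ, p θ * (Real.log (p θ) + Real.log (Real.cos θ)) := by
    apply intervalIntegral.integral_congr; intro x hx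
    rw [hu] at hx; simp only [hpe x hx]
  show ∫ θ in (-Θ)..Θ, m θ / Real.cos θ ^ 2 * (Real.log (m θ / Real.cos θ ^ 2) + Real.log (Real.cos θ)) ≤ _
  rw [hLHS]
  apply le_of_forall_pos_le_add
  intro η hη
  obtain ⟨S, S', hS, hSc', hlog, hS0, hsgn⟩ := transport hb hΘ hη p hpc hp0 hp1
  replace hsgn := hsgn hp2
  have hSc : ContinuousOn S (Set.Icc (-Θ) Θ) := fun x hx => (hS x hx).continuousAt.continuousWithinAt
  have hw : ∀ x ∈ Set.Icc (-Θ) Θ, 0 ≤ S x * Real.sin x / l := by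
    intro x hx
    have h3 := hsgn x hx
    apply div_nonneg _ hl.le
    have hpi := Real.pi_pos
    rcases lt_trichotomy x 0 with h | h | h
    · have h4 : S x ≤ 0 := by nlinarith
      have h5 : Real.sin x < 0 := Real.sin_neg_of_neg_of_neg_pi_lt h (by linarith [hx.1])
      exact mul_nonneg_of_nonpos_of_nonpos h4 h5.le
    · simp [h]
    · have h4 : 0 ≤ S x := by nlinarith
      have h5 : 0 < Real.sin x := Real.sin_pos_of_pos_of_lt_pi h (by linarith [hx.2])
      exact mul_nonneg h4 h5.le
  set q : ℝ → ℝ := fun x => (1 + S x * Real.sin x / l)⁻¹ with hq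
  have hq0 : ∀ x ∈ Set.Icc (-Θ) Θ, 0 < q x := fun x hx => by
    have := hw x hx; simp only [hq]; positivity
  have hq1 : ∀ x ∈ Set.Icc (-Θ) Θ, q x ≤ 1 := fun x hx => inv_le_one_of_one_le₀ (by linarith [hw x hx])
  have hqeq : ∀ x ∈ Set.Icc (-Θ) Θ, S x * Real.sin x * q x = l * (1 - q x) := fun x hx => by
    have := hw x hx; simp only [hq]
    have h6 : 1 + S x * Real.sin x / l ≠ 0 := by positivity
    have h7 : l + S x * Real.sin x ≠ 0 := by
      have : l + S x * Real.sin x = l * (1 + S x * Real.sin x / l) := by field_simp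
      rw [this]; positivity
    field_simp; ring
  have hqd : ∀ x ∈ Set.Icc (-Θ) Θ,
      HasDerivAt q (-(q x ^ 2) * ((S' x * Real.sin x + S x * Real.cos x) / l)) x := by
    intro x hx
    have h8 : (1 + S x * Real.sin x / l) ≠ 0 := by have := hw x hx; positivity
    have := ((((hS x hx).mul (Real.hasDerivAt_sin x)).div_const l).const_add 1).inv h8
    refine this.congr_deriv ?_
    simp only [hq, Pi.mul_apply]
    field_simp
  have hqc : ContinuousOn q (Set.Icc (-Θ) Θ) := fun x hx => (hqd x hx).continuousAt.continuousWithinAt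
  set A : ℝ → ℝ := fun x => S x + (b - c * q x) * Real.sin x with hA
  set AS : ℝ → ℝ := fun x => 1 + c / l * Real.sin x ^ 2 * q x ^ 2 with hAS
  set V' : ℝ → ℝ := fun x => (AS x * S' x + Real.cos x * (b - c * q x ^ 2)) / Real.cos x
      + A x * Real.sin x / Real.cos x ^ 2 with hV'
  have hAd : ∀ x ∈ Set.Icc (-Θ) Θ, HasDerivAt A (AS x * S' x + Real.cos x * (b - c * q x ^ 2)) x := by
    intro x hx
    have := (hS x hx).add ((((hqd x hx).const_mul c).const_sub b).mul (Real.hasDerivAt_sin x))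
    refine this.congr_deriv ?_
    have h9 := hqeq x hx
    simp only [hAS]
    have h10 : S x * Real.sin x / l * q x = 1 - q x := by
      rw [div_mul_eq_mul_div, h9]; field_simp
    have h11 : c * q x * Real.cos x * (S x * Real.sin x / l * q x) = c * q x * Real.cos x * (1 - q x) := by
      rw [h10]
    field_simp at h11 ⊢
    linear_combination h11
  have hVd : ∀ x ∈ Set.Icc (-Θ) Θ, HasDerivAt (fun x => A x / Real.cos x) (V' x) x := by
    intro x hx
    have hcx := (hcos x hx).ne'
    have := (hAd x hx).div (Real.hasDerivAt_cos x) hcx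
    refine this.congr_deriv ?_
    simp only [hV']
    field_simp
    ring
  have hcosc : ContinuousOn Real.cos (Set.Icc (-Θ) Θ) := Real.continuous_cos.continuousOn
  have hsinc : ContinuousOn Real.sin (Set.Icc (-Θ) Θ) := Real.continuous_sin.continuousOn
  have hAc : ContinuousOn A (Set.Icc (-Θ) Θ) := fun x hx => (hAd x hx).continuousAt.continuousWithinAt
  have hVc : ContinuousOn V' (Set.Icc (-Θ) Θ) := by
    apply ContinuousOn.add
    · apply ContinuousOn.div _ hcosc (fun x hx => (hcos x hx).ne')
      apply ContinuousOn.add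
      · apply ContinuousOn.mul _ hSc'
        simp only [hAS]; fun_prop
      · fun_prop
    · apply ContinuousOn.div _ (hcosc.pow 2) (fun x hx => pow_ne_zero 2 (hcos x hx).ne')
      fun_prop
  have hf := fibre2 hb hΘ hR F Ft hF hFt h1 h2 hFint _ V' hVd hVc
  set K := η - Real.log (2 * Real.pi * b) / 2 - 1 - b / 2 - G with hK
  have ii : ∀ g : ℝ → ℝ, ContinuousOn g (Set.Icc (-Θ) Θ) → IntervalIntegrable g volume (-Θ) Θ :=
    fun g hg => by apply ContinuousOn.intervalIntegrable; rwa [hu]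
  have c1 : ContinuousOn (fun θ => m θ * V' θ) (Set.Icc (-Θ) Θ) := hmc.continuousOn.mul hVc
  have c2 : ContinuousOn (fun θ => m θ * ((A θ / Real.cos θ) ^ 2 / (2 * b))) (Set.Icc (-Θ) Θ) :=
    hmc.continuousOn.mul (((hAc.div hcosc (fun x hx => (hcos x hx).ne')).pow 2).div_const _)
  have c3 : ContinuousOn (fun θ => p θ * K) (Set.Icc (-Θ) Θ) := hpc.continuousOn.mul_const _
  have c4 : ContinuousOn (fun θ => p θ * (Real.log (p θ) + Real.log (Real.cos θ))) (Set.Icc (-Θ) Θ) := by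
    have : (fun θ => p θ * (Real.log (p θ) + Real.log (Real.cos θ)))
      = fun θ => p θ * Real.log (p θ) + p θ * Real.log (Real.cos θ) := by ext; ring
    rw [this]
    apply ContinuousOn.add
    · exact (xlogx_cont.comp hpc).continuousOn
    · exact hpc.continuousOn.mul (hcosc.log (fun x hx => (hcos x hx).ne'))
  have hpt : ∫ θ in (-Θ)..Θ, p θ * (Real.log (p θ) + Real.log (Real.cos θ)) ≤
      ∫ θ in (-Θ)..Θ, (m θ * V' θ - m θ * ((A θ / Real.cos θ) ^ 2 / (2 * b)) + p θ * K) := by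
    apply intervalIntegral.integral_mono_on hT' (ii _ c4) (((ii _ c1).sub (ii _ c2)).add (ii _ c3))
    intro x hx
    have hcx := hcos x hx
    have hmx : m x = p x * Real.cos x ^ 2 := by rw [hpe x hx]; field_simp
    rcases (hp0 x).eq_or_lt with h0 | h0
    · rw [hmx, ← h0]; simp
    · obtain ⟨hSp, hl⟩ := hlog x hx h0
      have hASp : 0 < AS x := by simp only [hAS]; positivity
      have e1 := Real.log_le_sub_one_of_pos (mul_pos (mul_pos hSp hcx) hASp)
      rw [Real.log_mul (by positivity) hASp.ne', Real.log_mul hSp.ne' hcx.ne'] at e1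
      have e2 := hG (Real.sin x) (q x) (by nlinarith [Real.sin_sq_add_cos_sq x, sq_nonneg (Real.cos x)])
        (hq0 x hx) (hq1 x hx)
      have e3 : m x * V' x - m x * ((A x / Real.cos x) ^ 2 / (2 * b)) + p x * K
          = p x * ((AS x * S' x + Real.cos x * (b - c * q x ^ 2)) * Real.cos x + A x * Real.sin x
            - A x ^ 2 / (2 * b) + K) := by
        rw [hmx]; simp only [hV']; field_simp
      rw [e3]
      apply mul_le_mul_of_nonneg_left _ h0.le
      have e4 : A x * Real.sin x - A x ^ 2 / (2 * b) + S x ^ 2 / (2 * b)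
          = c * l / b * (1 - q x) + Real.sin x ^ 2 * (b / 2 - c ^ 2 * q x ^ 2 / (2 * b)) := by
        have h9 := hqeq x hx
        have : c * l / b * (1 - q x) = c / b * (S x * Real.sin x * q x) := by rw [h9]; ring
        rw [this]; simp only [hA]; field_simp; ring
      have e5 : Real.cos x ^ 2 = 1 - Real.sin x ^ 2 := by linarith [Real.sin_sq_add_cos_sq x]
      have e6 : Real.cos x * (b - c * q x ^ 2) * Real.cos x = (1 - Real.sin x ^ 2) * (b - c * q x ^ 2) := by
        rw [← e5]; ring
      have e7 : Real.log (AS x) = Real.log (1 + c / l * Real.sin x ^ 2 * q x ^ 2) := rfl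
      rw [hK, hl]
      have e8 : (AS x * S' x + Real.cos x * (b - c * q x ^ 2)) * Real.cos x
        = S' x * Real.cos x * AS x + (1 - Real.sin x ^ 2) * (b - c * q x ^ 2) := by rw [← e6]; ring
      rw [e8]
      rw [← e7] at e2
      have e9 : Real.sin x ^ 2 * (b / 2 - c ^ 2 * q x ^ 2 / (2 * b)) =
        Real.sin x ^ 2 * (b/2) - Real.sin x ^ 2 * c ^ 2 * q x ^ 2 / (2 * b) := by ring
      have e10 : (1 - Real.sin x ^ 2) * (b / 2 - c * q x ^ 2) =
        (1 - Real.sin x ^ 2) * (b - c * q x ^ 2) - b / 2 + Real.sin x ^ 2 * (b / 2) := by ring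
      rw [e9] at e4
      rw [e10] at e2
      linarith only [e1, e2, e4]
  rw [intervalIntegral.integral_add ((ii _ c1).sub (ii _ c2)) (ii _ c3),
    intervalIntegral.integral_sub (ii _ c1) (ii _ c2), intervalIntegral.integral_mul_const, hp1] at hpt
  linarith

set_option maxHeartbeats 1000000 in
lemma core {b c l G R Θ : ℝ} (hb : 0 < b) (hc : 0 ≤ c) (hl : 0 < l) (hΘ : 0 < Θ) (hΘ2 : Θ < Real.pi / 2)
    (hR : 0 < R)
    (hG : ∀ σ q : ℝ, σ ^ 2 ≤ 1 → 0 < q → q ≤ 1 →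
      G ≤ (1 - σ ^ 2) * (b / 2 - c * q ^ 2) + c * l / b * (1 - q)
        + Real.log (1 + c / l * σ ^ 2 * q ^ 2) - σ ^ 2 * c ^ 2 * q ^ 2 / (2 * b))
    (F Fs Ft : ℝ → ℝ → ℝ)
    (hF : Continuous (Function.uncurry F))
    (hFs : ∀ s θ, HasDerivAt (fun s => F s θ) (Fs s θ) s)
    (hFt : ∀ s θ, HasDerivAt (F s) (Ft s θ) θ)
    (h1 : ∀ s, F s (-Θ) = 0) (h2 : ∀ s, F s Θ = 0)
    (h3 : ∀ θ, F (-R) θ = 0) (h4 : ∀ θ, F R θ = 0)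
    (hSint : Integrable (fun z : ℝ × ℝ => Fs z.1 z.2 ^ 2)
      ((volume.restrict (Set.Ioc (-R) R)).prod (volume.restrict (Set.Ioc (-Θ) Θ))))
    (hFint : Integrable (fun z : ℝ × ℝ => Ft z.1 z.2 ^ 2)
      ((volume.restrict (Set.Ioc (-R) R)).prod (volume.restrict (Set.Ioc (-Θ) Θ))))
    (hm1 : ∫ θ in (-Θ)..Θ, (∫ s in (-R)..R, F s θ ^ 2) / Real.cos θ ^ 2 = 1)
    (hm2 : ∫ θ in (-Θ)..0, (∫ s in (-R)..R, F s θ ^ 2) / Real.cos θ ^ 2 = 1 / 2) :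
    ∫ z, F z.1 z.2 ^ 2 * Real.log (F z.1 z.2 ^ 2) / Real.cos z.2 ^ 2
        ∂((volume.restrict (Set.Ioc (-R) R)).prod (volume.restrict (Set.Ioc (-Θ) Θ))) ≤
      2 * b * ((∫ z, Fs z.1 z.2 ^ 2
        ∂((volume.restrict (Set.Ioc (-R) R)).prod (volume.restrict (Set.Ioc (-Θ) Θ)))) +
        (∫ z, Ft z.1 z.2 ^ 2
        ∂((volume.restrict (Set.Ioc (-R) R)).prod (volume.restrict (Set.Ioc (-Θ) Θ)))))
      - 2 - Real.log (2 * Real.pi * b) - b / 2 - G := by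
  have hth := theta hb hc hl hΘ hΘ2 hR hG F Ft hF hFt h1 h2 hFint hm1 hm2
  have hpi := Real.pi_pos
  have hT' : -Θ ≤ Θ := by linarith
  have hR' : -R ≤ R := by linarith
  have hcos : ∀ x ∈ Set.Icc (-Θ) Θ, 0 < Real.cos x := fun x hx =>
    Real.cos_pos_of_mem_Ioo ⟨by linarith [hx.1], by linarith [hx.2]⟩
  have hcosc : ContinuousOn Real.cos (Set.Icc (-Θ) Θ) := Real.continuous_cos.continuousOn
  set m : ℝ → ℝ := fun θ => ∫ s in (-R)..R, F s θ ^ 2 with hm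
  have hm0 : ∀ θ, 0 ≤ m θ := fun θ =>
    intervalIntegral.integral_nonneg (by linarith) fun x _ => sq_nonneg _
  have hmc : Continuous m := by
    apply intervalIntegral.continuous_parametric_intervalIntegral_of_continuous' (f := fun θ s => F s θ ^ 2)
    have : Continuous fun z : ℝ × ℝ => F z.2 z.1 := hF.comp continuous_swap
    exact this.pow 2
  have hFlog : IntegrableOn (fun z : ℝ × ℝ => F z.1 z.2 ^ 2 * Real.log (F z.1 z.2 ^ 2) / Real.cos z.2 ^ 2)
      (Set.Icc (-R) R ×ˢ Set.Icc (-Θ) Θ) := by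
    apply ContinuousOn.integrableOn_compact (isCompact_Icc.prod isCompact_Icc)
    apply ContinuousOn.div
    · have : Continuous fun z : ℝ × ℝ => F z.1 z.2 := hF
      exact (xlogx_cont.comp (this.pow 2)).continuousOn
    · exact (hcosc.pow 2).comp continuousOn_snd (fun z hz => hz.2)
    · intro z hz; exact pow_ne_zero 2 (hcos _ hz.2).ne'
  replace hFlog := hFlog.mono_set (Set.prod_mono (Set.Ioc_subset_Icc_self (a := -R) (b := R))
      (Set.Ioc_subset_Icc_self (a := -Θ) (b := Θ)))
  rw [IntegrableOn, Measure.volume_eq_prod, ← Measure.prod_restrict] at hFlog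
  rw [integral_prod_symm _ hFlog]
  have c0 : ContinuousOn (fun θ => m θ / Real.cos θ ^ 2) (Set.Icc (-Θ) Θ) :=
    hmc.continuousOn.div (hcosc.pow 2) (fun x hx => pow_ne_zero 2 (hcos x hx).ne')
  have c4 : ContinuousOn (fun θ => m θ / Real.cos θ ^ 2 *
      (Real.log (m θ / Real.cos θ ^ 2) + Real.log (Real.cos θ))) (Set.Icc (-Θ) Θ) := by
    simp only [mul_add]
    apply ContinuousOn.add
    · exact xlogx_cont.comp_continuousOn c0
    · exact c0.mul (hcosc.log (fun x hx => (hcos x hx).ne'))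
  have jj : ∀ g : ℝ → ℝ, ContinuousOn g (Set.Icc (-Θ) Θ) → Integrable g (volume.restrict (Set.Ioc (-Θ) Θ)) :=
    fun g hg => (hg.integrableOn_compact isCompact_Icc).mono_set Set.Ioc_subset_Icc_self
  set K := 1 + Real.log (2 * Real.pi * b) / 2 with hK
  have hmain : ∫ θ in Set.Ioc (-Θ) Θ, ∫ s in Set.Ioc (-R) R,
      F s θ ^ 2 * Real.log (F s θ ^ 2) / Real.cos θ ^ 2 ≤
      ∫ θ in Set.Ioc (-Θ) Θ, (m θ / Real.cos θ ^ 2 *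
        (Real.log (m θ / Real.cos θ ^ 2) + Real.log (Real.cos θ)) +
        2 * b * (∫ s in Set.Ioc (-R) R, Fs s θ ^ 2) - m θ / Real.cos θ ^ 2 * K) := by
    apply integral_mono_ae hFlog.integral_prod_right
    · exact ((jj _ c4).add (hSint.integral_prod_right.const_mul _)).sub ((jj _ c0).mul_const K)
    · filter_upwards [hSint.prod_left_ae, ae_restrict_mem measurableSet_Ioc] with θ hs hθ
      have hcx := hcos θ (Set.Ioc_subset_Icc_self hθ)
      have hs' : IntervalIntegrable (fun x => Fs x θ ^ 2) volume (-R) R := by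
        rw [intervalIntegrable_iff_integrableOn_Ioc_of_le hR']; exact hs
      have hb' : 0 < b * Real.cos θ ^ 2 := by positivity
      have := logsob1 hb' hR (fun s => F s θ) (fun s => Fs s θ) (fun s => hFs s θ) (h3 θ) (h4 θ) hs'
      rw [← intervalIntegral.integral_of_le hR', ← intervalIntegral.integral_of_le hR',
        intervalIntegral.integral_div]
      rw [div_le_iff₀ (by positivity)]
      refine this.trans (le_of_eq ?_)
      change m θ * Real.log (m θ) + _ - m θ * _ = _
      have hlb : Real.log (2 * Real.pi * (b * Real.cos θ ^ 2)) / 2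
          = Real.log (2 * Real.pi * b) / 2 + Real.log (Real.cos θ) := by
        rw [← mul_assoc, Real.log_mul (by positivity) (by positivity), Real.log_pow]; push_cast; ring
      rw [hlb]
      rcases (hm0 θ).eq_or_lt with h0 | h0
      · rw [← h0]; simp; ring
      · rw [Real.log_div h0.ne' (by positivity), Real.log_pow, hK]
        push_cast
        field_simp
        ring
  refine hmain.trans ?_
  have k1 : Integrable (fun θ => 2 * b * (∫ s in Set.Ioc (-R) R, Fs s θ ^ 2))
      (volume.restrict (Set.Ioc (-Θ) Θ)) := hSint.integral_prod_right.const_mul _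
  have k2 : Integrable (fun θ => m θ / Real.cos θ ^ 2 *
        (Real.log (m θ / Real.cos θ ^ 2) + Real.log (Real.cos θ)) +
        2 * b * (∫ s in Set.Ioc (-R) R, Fs s θ ^ 2))
      (volume.restrict (Set.Ioc (-Θ) Θ)) := (jj _ c4).add k1
  have k3 := integral_prod_symm _ hSint
  rw [integral_sub k2 ((jj _ c0).mul_const K), integral_add (jj _ c4) k1, integral_const_mul,
    integral_mul_const, k3]
  rw [← intervalIntegral.integral_of_le hT', ← intervalIntegral.integral_of_le hT',
    ← intervalIntegral.integral_of_le hT', hm1]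
  rw [hK]
  linarith

lemma hG_small {b : ℝ} (hb : 0 < b) (hb1 : b ≤ 1) (σ q : ℝ) (hσ : σ ^ 2 ≤ 1) (hq : 0 < q) (hq1 : q ≤ 1) :
    b / 8 ≤ (1 - σ ^ 2) * (b / 2 - (b / 4) * q ^ 2) + (b / 4) * b / b * (1 - q)
        + Real.log (1 + (b / 4) / b * σ ^ 2 * q ^ 2) - σ ^ 2 * (b / 4) ^ 2 * q ^ 2 / (2 * b) := by
  have h1 : (b / 4) / b = 1 / 4 := by field_simp
  have h2 : (b / 4) * b / b = b / 4 := by field_simp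
  have h3 : σ ^ 2 * (b / 4) ^ 2 * q ^ 2 / (2 * b) = σ ^ 2 * q ^ 2 * b / 32 := by field_simp; ring
  rw [h1, h2, h3]
  have hs := sq_nonneg σ
  set t := σ ^ 2
  have hq2 : q ^ 2 ≤ 1 := by nlinarith
  have hy : 0 ≤ t * q ^ 2 := by positivity
  have hy1 : t * q ^ 2 ≤ 1 := by nlinarith [sq_nonneg q]
  have hlog : t * q ^ 2 / 5 ≤ Real.log (1 + 1 / 4 * t * q ^ 2) := by
    have hp : 0 < 1 + 1 / 4 * t * q ^ 2 := by nlinarith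
    have := Real.one_sub_inv_le_log_of_pos hp
    refine le_trans ?_ this
    rw [le_sub_iff_add_le, ← le_sub_iff_add_le', inv_eq_one_div, div_le_iff₀ hp]
    nlinarith
  have hA : b / 8 ≤ (1 - t) * (b / 4) + t * ((b / 4) * (1 - q) + q ^ 2 * (1 / 5 - b / 32)) := by
    have : b / 8 ≤ (b / 4) * (1 - q) + q ^ 2 * (1 / 5 - b / 32) := by
      have : q ^ 2 * (1 / 5 - b / 32) ≥ q ^ 2 * b * (1 / 5 - 1 / 32) := by
        have := sq_nonneg q
        nlinarith [mul_nonneg this (sub_nonneg.2 hb1)]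
      nlinarith [mul_nonneg hb.le (sq_nonneg (q - 20/27))]
    nlinarith
  nlinarith [mul_nonneg (mul_nonneg (sub_nonneg.2 hσ) hb.le) (sub_nonneg.2 hq2), mul_nonneg (mul_nonneg (sub_nonneg.2 hσ) hb.le) (sub_nonneg.2 hq1)]

lemma hG_big {b : ℝ} (hb : 0 < b) (σ q : ℝ) (hσ : σ ^ 2 ≤ 1) :
    0 ≤ (1 - σ ^ 2) * (b / 2 - 0 * q ^ 2) + 0 * 1 / b * (1 - q)
        + Real.log (1 + 0 / 1 * σ ^ 2 * q ^ 2) - σ ^ 2 * 0 ^ 2 * q ^ 2 / (2 * b) := by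
  simp; nlinarith

lemma log_le_half {v : ℝ} (hv : 1 ≤ v) : Real.log v ≤ (v - v⁻¹) / 2 := by
  rw [← Real.sinh_log (by linarith)]
  exact Real.self_le_sinh_iff.2 (Real.log_nonneg hv)

lemma delta_small {u : ℝ} (hu : 0 < u) (hu1 : u < 1) (h : u * (2 + u) / (2 * (1 - u)) ≤ 1) :
    -(2 / u) * Real.log (1 - u) - 2 - Real.log (1 + u / 2) - u * (2 + u) / (2 * (1 - u)) / 2
      ≤ u * (2 + u) / (2 * (1 - u)) / 8 := by
  have h1u : 0 < 1 - u := by linarith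
  have h1 : -Real.log (1 - u) ≤ u * (2 - u) / (2 * (1 - u)) := by
    have := log_le_half (v := (1 - u)⁻¹) (by rw [one_le_inv₀ h1u]; linarith)
    rw [Real.log_inv] at this
    refine this.trans (le_of_eq ?_)
    field_simp; ring
  have h2 := Real.le_log_one_add_of_nonneg (x := u / 2) (by linarith)
  have h1' : -(2 / u) * Real.log (1 - u) ≤ (2 - u) / (1 - u) := by
    have := mul_le_mul_of_nonneg_left h1 (by positivity : 0 ≤ 2 / u)
    refine le_trans (le_of_eq (by ring)) (this.trans (le_of_eq ?_))
    field_simp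
  have hu2 : u ≤ 1 / 2 := by
    rw [div_le_one (by positivity)] at h
    nlinarith
  have h3 : (2 - u) / (1 - u) - 2 - 2 * (u / 2) / (u / 2 + 2) - u * (2 + u) / (2 * (1 - u)) / 2
      ≤ u * (2 + u) / (2 * (1 - u)) / 8 := by
    rw [← sub_nonneg]
    have : u * (2 + u) / (2 * (1 - u)) / 8 - ((2 - u) / (1 - u) - 2 - 2 * (u / 2) / (u / 2 + 2) - u * (2 + u) / (2 * (1 - u)) / 2)
       = u * (32 * (1 - u) + 5 * (2 + u) * (4 + u) - 16 * (4 + u)) / (16 * (1 - u) * (4 + u)) := by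
      field_simp
      ring
    rw [this]
    apply div_nonneg _ (by positivity)
    apply mul_nonneg hu.le
    nlinarith
  linarith

lemma delta_big {u : ℝ} (hu : 0 < u) (hu1 : u < 1) (h : 1 < u * (2 + u) / (2 * (1 - u))) :
    -(2 / u) * Real.log (1 - u) - 2 - Real.log (1 + u / 2) - u * (2 + u) / (2 * (1 - u)) / 2
      ≤ 0 := by
  have h1u : 0 < 1 - u := by linarith
  obtain ⟨v, hv, hvu⟩ : ∃ v : ℝ, 1 < v ∧ 1 - u = (v ^ 2)⁻¹ := by
    refine ⟨(Real.sqrt (1 - u))⁻¹, ?_, ?_⟩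
    · rw [one_lt_inv₀ (Real.sqrt_pos.2 h1u), Real.sqrt_lt' one_pos]; linarith
    · rw [inv_pow, inv_inv, Real.sq_sqrt h1u.le]
  have hu' : u = 1 - (v ^ 2)⁻¹ := by linarith
  have hv0 : 0 < v := by linarith
  have hv2 : 0 < v ^ 2 - 1 := by nlinarith
  have h2 := Real.le_log_one_add_of_nonneg (x := u / 2) (by linarith)
  have h1' : -(2 / u) * Real.log (1 - u) ≤ 2 * v := by
    rw [hvu, Real.log_inv, Real.log_pow, hu']
    have := log_le_half hv.le
    have e : 2 * v = (2 / (1 - (v ^ 2)⁻¹)) * (2 * ((v - v⁻¹) / 2)) := by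
      field_simp
    rw [e]
    have : (0:ℝ) ≤ 2 / (1 - (v ^ 2)⁻¹) := by rw [← hu']; positivity
    push_cast
    nlinarith
  have hb : u * (2 + u) / (2 * (1 - u)) = (v ^ 2 - 1) * (3 * v ^ 2 - 1) / (2 * v ^ 2) := by
    rw [hvu, hu']; field_simp; ring
  rw [hb] at h ⊢
  have hl : 2 * (u / 2) / (u / 2 + 2) = 2 * (v ^ 2 - 1) / (5 * v ^ 2 - 1) := by
    have : 5 * v ^ 2 - 1 ≠ 0 := by nlinarith
    have h' : u / 2 + 2 ≠ 0 := by positivity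
    rw [div_eq_div_iff h' this, hu']
    field_simp
    ring
  rw [hl] at h2
  have hvv : 67 / 50 ≤ v := by
    by_contra hc
    push Not at hc
    rw [lt_div_iff₀ (by positivity)] at h
    have : v ^ 2 < 1.8 := by nlinarith
    nlinarith
  have h3 : 2 * v - 2 - 2 * (v ^ 2 - 1) / (5 * v ^ 2 - 1) - (v ^ 2 - 1) * (3 * v ^ 2 - 1) / (2 * v ^ 2) / 2
      ≤ 0 := by
    have h5 : 0 < 5 * v ^ 2 - 1 := by nlinarith
    have : 2 * v - 2 - 2 * (v ^ 2 - 1) / (5 * v ^ 2 - 1) - (v ^ 2 - 1) * (3 * v ^ 2 - 1) / (2 * v ^ 2) / 2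
       = - ((v - 1) * (15 * v ^ 5 - 25 * v ^ 4 + 8 * v ^ 2 + v + 1) / (4 * v ^ 2 * (5 * v ^ 2 - 1))) := by
      have h6 : ∀ X : ℝ, X ≠ 0 → 2 * v - 2 - 2 * (v ^ 2 - 1) / X - (v ^ 2 - 1) * (3 * v ^ 2 - 1) / (2 * v ^ 2) / 2
          = (8 * v ^ 2 * (v - 1) * X - 8 * v ^ 2 * (v ^ 2 - 1) - X * ((v ^ 2 - 1) * (3 * v ^ 2 - 1))) / (4 * v ^ 2 * X) := by
        intro X hX
        field_simp
        ring
      rw [h6 _ h5.ne', ← neg_div]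
      congr 1
      ring
    rw [this]
    apply neg_nonpos.2
    apply div_nonneg _ (by positivity)
    apply mul_nonneg (by linarith)
    obtain ⟨t, rfl⟩ : ∃ t, v = t + 67 / 50 := ⟨v - 67 / 50, by ring⟩
    have ht : 0 ≤ t := by linarith
    ring_nf
    positivity
  linarith

lemma params {k : ℝ} (hk : 1 < k) : ∃ c l G : ℝ, 0 ≤ c ∧ 0 < l ∧
    (∀ σ q : ℝ, σ ^ 2 ≤ 1 → 0 < q → q ≤ 1 →
      G ≤ (1 - σ ^ 2) * ((2 * k + 1) / (2 * k * (k - 1)) / 2 - c * q ^ 2) + c * l / ((2 * k + 1) / (2 * k * (k - 1))) * (1 - q)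
        + Real.log (1 + c / l * σ ^ 2 * q ^ 2) - σ ^ 2 * c ^ 2 * q ^ 2 / (2 * ((2 * k + 1) / (2 * k * (k - 1))))) ∧
    - 2 - Real.log (2 * Real.pi * ((2 * k + 1) / (2 * k * (k - 1)))) - (2 * k + 1) / (2 * k * (k - 1)) / 2 - G ≤
      2 * k * Real.log ((k - 1) / k) + Real.log ((k - 1) / (2 * Real.pi)) := by
  have hpi := Real.pi_pos
  have hk1 : 0 < k - 1 := by linarith
  have hk0 : 0 < k := by linarith
  set b := (2 * k + 1) / (2 * k * (k - 1)) with hb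
  have hbp : 0 < b := by positivity
  have e1 : k⁻¹ * (2 + k⁻¹) / (2 * (1 - k⁻¹)) = b := by
    have : 1 - k⁻¹ = (k - 1) / k := by field_simp
    rw [this, hb]; field_simp
  have e2 : (k - 1) / k = 1 - k⁻¹ := by field_simp
  have e3 : Real.log ((k - 1) / (2 * Real.pi)) + Real.log (2 * Real.pi * b) = Real.log (1 + k⁻¹ / 2) := by
    rw [← Real.log_mul (by positivity) (by positivity)]
    congr 1
    rw [hb]; field_simp
  have e4 : -(2 / k⁻¹) = - (2 * k) := by rw [div_inv_eq_mul]
  have hu : 0 < k⁻¹ := by positivity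
  have hu1 : k⁻¹ < 1 := inv_lt_one_of_one_lt₀ hk
  by_cases hb1 : b ≤ 1
  · refine ⟨b / 4, b, b / 8, by positivity, hbp, fun σ q h1 h2 h3 => hG_small hbp hb1 σ q h1 h2 h3, ?_⟩
    have := delta_small hu hu1 (by rw [e1]; exact hb1)
    rw [e1, e4] at this
    rw [e2]
    linarith
  · push Not at hb1
    refine ⟨0, 1, 0, le_rfl, one_pos, fun σ q h1 h2 h3 => hG_big hbp σ q h1, ?_⟩
    have := delta_big hu hu1 (by rw [e1]; exact hb1)
    rw [e1, e4] at this
    rw [e2]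
    linarith

noncomputable def cay (w : ℂ) : ℂ := (Complex.exp w - 1) / (Complex.exp w + 1)

lemma strip_re {w : ℂ} (hw : |w.im| < Real.pi / 2) : 0 < (Complex.exp w).re := by
  rw [Complex.exp_re]
  exact mul_pos (Real.exp_pos _) (Real.cos_pos_of_mem_Ioo (abs_lt.1 hw))

lemma strip_ne {w : ℂ} (hw : |w.im| < Real.pi / 2) : Complex.exp w + 1 ≠ 0 := by
  intro h
  have := congrArg Complex.re h
  have h2 := strip_re hw
  simp only [Complex.add_re, Complex.one_re, Complex.zero_re] at this
  linarith

lemma cay_deriv {w : ℂ} (hw : |w.im| < Real.pi / 2) :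
    HasDerivAt cay (2 * Complex.exp w / (Complex.exp w + 1) ^ 2) w := by
  have h := strip_ne hw
  have h1 := Complex.hasDerivAt_exp w
  have := (h1.sub_const 1).div (h1.add_const 1) h
  refine this.congr_deriv ?_
  ring

lemma cay_exp {w : ℂ} (hw : |w.im| < Real.pi / 2) : (1 + cay w) / (1 - cay w) = Complex.exp w := by
  have h := strip_ne hw
  unfold cay
  have h2 : 1 - (Complex.exp w - 1) / (Complex.exp w + 1) = 2 / (Complex.exp w + 1) := by
    field_simp; ring
  have h3 : 1 + (Complex.exp w - 1) / (Complex.exp w + 1) = 2 * Complex.exp w / (Complex.exp w + 1) := by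
    field_simp; ring
  rw [h2, h3]; field_simp

lemma cay_log {w : ℂ} (hw : |w.im| < Real.pi / 2) : Complex.log ((1 + cay w) / (1 - cay w)) = w := by
  rw [cay_exp hw]
  have := abs_lt.1 hw
  have hp := Real.pi_pos
  exact Complex.log_exp (by linarith) (by linarith)

lemma cay_norm {w : ℂ} (hw : |w.im| < Real.pi / 2) :
    1 - ‖cay w‖ ^ 2 = 4 * (Real.exp w.re * Real.cos w.im) / ‖Complex.exp w + 1‖ ^ 2 := by
  have h := strip_ne hw
  have h' : ‖Complex.exp w + 1‖ ^ 2 ≠ 0 := by positivity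
  unfold cay
  rw [norm_div, div_pow, eq_div_iff h', sub_mul, div_mul_cancel₀ _ h', ← Complex.exp_re,
    ← Complex.normSq_eq_norm_sq, ← Complex.normSq_eq_norm_sq, Complex.normSq_apply, Complex.normSq_apply]
  simp
  ring

lemma cay_ball {w : ℂ} (hw : |w.im| < Real.pi / 2) : ‖cay w‖ < 1 := by
  have h := strip_ne hw
  have h1 := cay_norm hw
  have h2 : 0 < 1 - ‖cay w‖ ^ 2 := by
    rw [h1]
    have : 0 < Real.cos w.im := Real.cos_pos_of_mem_Ioo (abs_lt.1 hw)
    positivity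
  nlinarith [norm_nonneg (cay w)]

lemma cay_density {w : ℂ} (hw : |w.im| < Real.pi / 2) :
    ‖2 * Complex.exp w / (Complex.exp w + 1) ^ 2‖ ^ 2 * (4 * ((1 - ‖cay w‖ ^ 2) ^ 2)⁻¹) = 1 / Real.cos w.im ^ 2 := by
  have h := strip_ne hw
  have h' : 0 < ‖Complex.exp w + 1‖ := by positivity
  have : 0 < Real.cos w.im := Real.cos_pos_of_mem_Ioo (abs_lt.1 hw)
  rw [cay_norm hw, norm_div, norm_mul, norm_pow, Complex.norm_exp]
  simp
  have := Real.exp_pos w.re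
  field_simp
  norm_num

lemma cay_im {w : ℂ} (hw : |w.im| < Real.pi / 2) : (cay w).im ≤ 0 ↔ w.im ≤ 0 := by
  have h := strip_ne hw
  have h' : 0 < Complex.normSq (Complex.exp w + 1) := Complex.normSq_pos.2 h
  have e : (cay w).im = 2 * Real.exp w.re / Complex.normSq (Complex.exp w + 1) * Real.sin w.im := by
    unfold cay
    rw [Complex.div_im]
    simp [Complex.exp_im, Complex.exp_re]
    field_simp
    ring
  rw [e]
  have hp : 0 < 2 * Real.exp w.re / Complex.normSq (Complex.exp w + 1) := by positivity
  have hh := abs_lt.1 hw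
  have hpi := Real.pi_pos
  constructor
  · intro h1
    by_contra hc
    push Not at hc
    have := Real.sin_pos_of_pos_of_lt_pi hc (by linarith)
    nlinarith [mul_pos hp this]
  · intro h1
    have := Real.sin_nonpos_of_nonpos_of_neg_pi_le h1 (by linarith)
    nlinarith [mul_nonneg hp.le (neg_nonneg.2 this)]

lemma cay_surj {ζ : ℂ} (hζ : ‖ζ‖ < 1) : |(Complex.log ((1 + ζ) / (1 - ζ))).im| < Real.pi / 2 ∧
    cay (Complex.log ((1 + ζ) / (1 - ζ))) = ζ := by
  have h1 : 1 - ζ ≠ 0 := by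
    intro h
    have : ζ = 1 := by linear_combination -h
    rw [this] at hζ; simp at hζ
  have h2 : 1 + ζ ≠ 0 := by
    intro h
    have : ζ = -1 := by linear_combination h
    rw [this] at hζ; simp at hζ
  have hne : (1 + ζ) / (1 - ζ) ≠ 0 := div_ne_zero h2 h1
  have hre : 0 < ((1 + ζ) / (1 - ζ)).re := by
    have h' : 0 < Complex.normSq (1 - ζ) := Complex.normSq_pos.2 h1
    have hn : Complex.normSq ζ < 1 := by
      rw [Complex.normSq_eq_norm_sq]; nlinarith [norm_nonneg ζ]
    rw [Complex.normSq_apply] at hn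
    have e : ((1 + ζ) / (1 - ζ)).re = (1 - (ζ.re * ζ.re + ζ.im * ζ.im)) / Complex.normSq (1 - ζ) := by
      rw [Complex.div_re]
      simp
      field_simp
      ring
    rw [e]
    apply div_pos _ h'
    linarith
  constructor
  · rw [Complex.log_im, Complex.abs_arg_lt_pi_div_two_iff]
    exact Or.inl hre
  · unfold cay
    rw [Complex.exp_log hne]
    have h3 : (1 + ζ) / (1 - ζ) + 1 = 2 / (1 - ζ) := by field_simp; ring
    have h4 : (1 + ζ) / (1 - ζ) - 1 = 2 * ζ / (1 - ζ) := by field_simp; ring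
    rw [h3, h4]; field_simp

lemma cay_box {r : ℝ} (hr0 : 0 ≤ r) (hr : r < 1) : ∃ R Θ : ℝ, 0 < R ∧ 0 < Θ ∧ Θ < Real.pi / 2 ∧
    ∀ ζ : ℂ, ‖ζ‖ ≤ r → |(Complex.log ((1 + ζ) / (1 - ζ))).re| < R ∧ |(Complex.log ((1 + ζ) / (1 - ζ))).im| < Θ := by
  have hpi := Real.pi_pos
  have hc : ContinuousOn (fun ζ : ℂ => Complex.log ((1 + ζ) / (1 - ζ))) (closedBall 0 r) := by
    apply ContinuousOn.clog
    · apply ContinuousOn.div (by fun_prop) (by fun_prop)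
      intro ζ hζ h
      have : ζ = 1 := by linear_combination -h
      rw [this] at hζ; simp at hζ; linarith
    · intro ζ hζ
      have hζ' : ‖ζ‖ < 1 := by simp at hζ; linarith
      have := (cay_surj hζ').1
      rw [Complex.log_im] at this
      rw [Complex.mem_slitPlane_iff_arg]
      have h5 := abs_lt.1 this
      refine ⟨by linarith, ?_⟩
      have h1 : 1 - ζ ≠ 0 := by
        intro h
        have : ζ = 1 := by linear_combination -h
        rw [this] at hζ'; simp at hζ'
      have h2 : 1 + ζ ≠ 0 := by
        intro h
        have : ζ = -1 := by linear_combination h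
        rw [this] at hζ'; simp at hζ'
      exact div_ne_zero h2 h1
  have hne : (closedBall (0:ℂ) r).Nonempty := ⟨0, by simpa using hr0⟩
  obtain ⟨z1, hz1, hm1⟩ := (isCompact_closedBall (0:ℂ) r).exists_isMaxOn hne
    (Complex.continuous_re.comp_continuousOn hc).abs
  obtain ⟨z2, hz2, hm2⟩ := (isCompact_closedBall (0:ℂ) r).exists_isMaxOn hne
    (Complex.continuous_im.comp_continuousOn hc).abs
  have hz2' : ‖z2‖ < 1 := by simp at hz2; linarith
  have hb := (cay_surj hz2').1
  refine ⟨|(Complex.log ((1 + z1) / (1 - z1))).re| + 1, (|(Complex.log ((1 + z2) / (1 - z2))).im| + Real.pi / 2) / 2,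
    by positivity, by positivity, by linarith, ?_⟩
  intro ζ hζ
  have hζ' : ζ ∈ closedBall (0:ℂ) r := by simpa using hζ
  have a1 := hm1 hζ'
  have a2 := hm2 hζ'
  simp at a1 a2
  constructor <;> linarith

lemma det_mul_real (z : ℂ) : ((ContinuousLinearMap.restrictScalars ℝ
    (ContinuousLinearMap.toSpanSingleton ℂ z : ℂ →L[ℂ] ℂ) : ℂ →L[ℝ] ℂ)).det = ‖z‖ ^ 2 := by
  have h : (ContinuousLinearMap.restrictScalars ℝ
    (ContinuousLinearMap.toSpanSingleton ℂ z : ℂ →L[ℂ] ℂ) : ℂ →L[ℝ] ℂ).det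
     = LinearMap.det (LinearMap.mul ℝ ℂ z) := by
    rw [ContinuousLinearMap.det]
    congr 1
    ext x
    simp [mul_comm]
  rw [h, ← LinearMap.det_toMatrix Complex.basisOneI, Matrix.det_fin_two]
  simp [LinearMap.toMatrix_apply, ← Complex.normSq_eq_norm_sq, Complex.normSq_apply]

noncomputable def cayD (w : ℂ) : ℝ := ‖2 * Complex.exp w / (Complex.exp w + 1) ^ 2‖ ^ 2

lemma cay_cov {B : Set ℂ} (hB : MeasurableSet B) (hBs : ∀ w ∈ B, |w.im| < Real.pi / 2) (h : ℂ → ℝ) :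
    ∫ ζ in cay '' B, h ζ = ∫ w in B, cayD w * h (cay w) := by
  have hinj : Set.InjOn cay B := fun x hx y hy hxy => by
    rw [← cay_log (hBs x hx), ← cay_log (hBs y hy), hxy]
  have := integral_image_eq_integral_abs_det_fderiv_smul volume hB
    (fun w hw => ((cay_deriv (hBs w hw)).hasFDerivAt.restrictScalars ℝ).hasFDerivWithinAt) hinj h
  rw [this]
  apply setIntegral_congr_fun hB
  intro w hw
  simp only [smul_eq_mul]
  rw [det_mul_real, abs_of_nonneg (by positivity), cayD]

lemma cay_cov_int {B : Set ℂ} (hB : MeasurableSet B) (hBs : ∀ w ∈ B, |w.im| < Real.pi / 2) (h : ℂ → ℝ)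
    (hh : IntegrableOn h (ball 0 1)) :
    IntegrableOn (fun w => cayD w * h (cay w)) B := by
  have hinj : Set.InjOn cay B := fun x hx y hy hxy => by
    rw [← cay_log (hBs x hx), ← cay_log (hBs y hy), hxy]
  have hsub : cay '' B ⊆ ball 0 1 := by
    rintro _ ⟨w, hw, rfl⟩
    simpa using cay_ball (hBs w hw)
  have := (integrableOn_image_iff_integrableOn_abs_det_fderiv_smul volume hB
    (fun w hw => ((cay_deriv (hBs w hw)).hasFDerivAt.restrictScalars ℝ).hasFDerivWithinAt) hinj h).1
    (hh.mono_set hsub)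
  refine this.congr_fun ?_ hB
  intro w hw
  simp only [smul_eq_mul]
  rw [det_mul_real, abs_of_nonneg (by positivity), cayD]

lemma box_eq (A B : Set ℝ) : A ×ℂ B = Complex.measurableEquivRealProd ⁻¹' (A ×ˢ B) := by
  ext w
  simp [Complex.mem_reProdIm, Complex.measurableEquivRealProd]

lemma box_meas {A B : Set ℝ} (hA : MeasurableSet A) (hB : MeasurableSet B) : MeasurableSet (A ×ℂ B) := by
  rw [box_eq]
  exact Complex.measurableEquivRealProd.measurable (hA.prod hB)

lemma cay_full {r R Θ : ℝ} (hΘ2 : Θ < Real.pi / 2)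
    (hbox : ∀ ζ : ℂ, ‖ζ‖ ≤ r → |(Complex.log ((1 + ζ) / (1 - ζ))).re| < R ∧ |(Complex.log ((1 + ζ) / (1 - ζ))).im| < Θ)
    (h : ℂ → ℝ) (hh : ∀ ζ, r ≤ ‖ζ‖ → h ζ = 0) :
    ∫ ζ in ball 0 1, h ζ = ∫ w in (Set.Ioc (-R) R ×ℂ Set.Ioc (-Θ) Θ), cayD w * h (cay w) := by
  have hB : MeasurableSet (Set.Ioc (-R) R ×ℂ Set.Ioc (-Θ) Θ) := box_meas measurableSet_Ioc measurableSet_Ioc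
  have hBs : ∀ w ∈ (Set.Ioc (-R) R ×ℂ Set.Ioc (-Θ) Θ), |w.im| < Real.pi / 2 := by
    intro w hw
    have := (Complex.mem_reProdIm.1 hw).2
    rw [abs_lt]; exact ⟨by linarith [this.1], by linarith [this.2]⟩
  rw [← cay_cov hB hBs]
  apply setIntegral_eq_of_subset_of_forall_sdiff_eq_zero measurableSet_ball
  · rintro _ ⟨w, hw, rfl⟩
    simpa using cay_ball (hBs w hw)
  · intro ζ hζ
    apply hh
    by_contra hc
    push Not at hc
    apply hζ.2
    obtain ⟨h1, h2⟩ := hbox ζ hc.le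
    refine ⟨_, ?_, (cay_surj (by simpa using hζ.1)).2⟩
    rw [abs_lt] at h1 h2
    exact Complex.mem_reProdIm.2 ⟨⟨h1.1, h1.2.le⟩, ⟨h2.1, h2.2.le⟩⟩

lemma box_mp (A B : Set ℝ) (hA : MeasurableSet A) (hB : MeasurableSet B) :
    MeasurePreserving Complex.measurableEquivRealProd (volume.restrict (A ×ℂ B))
      ((volume.restrict A).prod (volume.restrict B)) := by
  rw [Measure.prod_restrict, ← Measure.volume_eq_prod]
  have := Complex.volume_preserving_equiv_real_prod.restrict_preimage (hA.prod hB)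
  rw [box_eq]
  exact this

lemma box_int (A B : Set ℝ) (hA : MeasurableSet A) (hB : MeasurableSet B) (h : ℂ → ℝ) :
    ∫ w in A ×ℂ B, h w = ∫ z : ℝ × ℝ, h (z.1 + z.2 * Complex.I) ∂((volume.restrict A).prod (volume.restrict B)) := by
  rw [← (box_mp A B hA hB).integral_comp Complex.measurableEquivRealProd.measurableEmbedding]
  congr 1
  ext w
  simp [Complex.measurableEquivRealProd, Complex.re_add_im]

lemma box_integrable (A B : Set ℝ) (hA : MeasurableSet A) (hB : MeasurableSet B) (h : ℂ → ℝ)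
    (hh : IntegrableOn h (A ×ℂ B)) :
    Integrable (fun z : ℝ × ℝ => h (z.1 + z.2 * Complex.I)) ((volume.restrict A).prod (volume.restrict B)) := by
  rw [← (box_mp A B hA hB).integrable_comp_emb Complex.measurableEquivRealProd.measurableEmbedding]
  refine Integrable.congr hh (Filter.Eventually.of_forall fun w => ?_)
  simp [Complex.measurableEquivRealProd, Complex.re_add_im]

lemma iter_int {R Θ t : ℝ} (hR : 0 < R) (hΘ2 : Θ < Real.pi / 2) (ht : -Θ ≤ t) (ht' : t ≤ Θ)
    (F : ℝ → ℝ → ℝ) (hF : Continuous (Function.uncurry F)) :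
    ∫ θ in (-Θ)..t, (∫ s in (-R)..R, F s θ ^ 2) / Real.cos θ ^ 2 =
    ∫ z : ℝ × ℝ, F z.1 z.2 ^ 2 / Real.cos z.2 ^ 2
      ∂((volume.restrict (Set.Ioc (-R) R)).prod (volume.restrict (Set.Ioc (-Θ) t))) := by
  have hcos : ∀ x ∈ Set.Icc (-Θ) t, 0 < Real.cos x := fun x hx =>
    Real.cos_pos_of_mem_Ioo ⟨by linarith [hx.1], by linarith [hx.2]⟩
  have hFlog : IntegrableOn (fun z : ℝ × ℝ => F z.1 z.2 ^ 2 / Real.cos z.2 ^ 2)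
      (Set.Icc (-R) R ×ˢ Set.Icc (-Θ) t) := by
    apply ContinuousOn.integrableOn_compact (isCompact_Icc.prod isCompact_Icc)
    apply ContinuousOn.div
    · have : Continuous fun z : ℝ × ℝ => F z.1 z.2 := hF
      exact (this.pow 2).continuousOn
    · exact (Real.continuous_cos.continuousOn.pow 2).comp continuousOn_snd (fun z hz => hz.2)
    · intro z hz; exact pow_ne_zero 2 (hcos _ hz.2).ne'
  replace hFlog := hFlog.mono_set (Set.prod_mono (Set.Ioc_subset_Icc_self (a := -R) (b := R))
      (Set.Ioc_subset_Icc_self (a := -Θ) (b := t)))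
  rw [IntegrableOn, Measure.volume_eq_prod, ← Measure.prod_restrict] at hFlog
  rw [integral_prod_symm _ hFlog, intervalIntegral.integral_of_le ht]
  congr 1
  ext θ
  rw [intervalIntegral.integral_of_le (by linarith), ← integral_div]

noncomputable def rho (ζ : ℂ) : ℝ := 4 * ((1 - ‖ζ‖ ^ 2) ^ 2)⁻¹

lemma lin_sq (L : ℂ →L[ℝ] ℝ) (z : ℂ) : (L z) ^ 2 + (L (z * Complex.I)) ^ 2 ≤ ‖z‖ ^ 2 * ‖L‖ ^ 2 := by
  set α := L z
  set β := L (z * Complex.I)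
  have h1 : α ^ 2 + β ^ 2 = L (z * (α + β * Complex.I)) := by
    have : z * (α + β * Complex.I) = α • z + β • (z * Complex.I) := by
      simp; ring
    rw [this, map_add, map_smul, map_smul]
    simp only [smul_eq_mul]
    change α ^ 2 + β ^ 2 = α * α + β * β
    ring
  have h2 := (le_abs_self _).trans (L.le_opNorm (z * (α + β * Complex.I)))
  rw [← h1, norm_mul] at h2
  have h3 : ‖(α + β * Complex.I : ℂ)‖ ^ 2 = α ^ 2 + β ^ 2 := by
    rw [← Complex.normSq_eq_norm_sq, Complex.normSq_add_mul_I]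
  set n := ‖(α + β * Complex.I : ℂ)‖
  rw [← h3] at h2 ⊢
  have hn : 0 ≤ n := norm_nonneg _
  rcases hn.eq_or_lt with h | h
  · rw [← h]; simp only [ne_eq, OfNat.ofNat_ne_zero, not_false_eq_true, zero_pow]; positivity
  · have : n ≤ ‖z‖ * ‖L‖ := by
      by_contra hc
      push Not at hc
      nlinarith
    rw [← mul_pow]
    exact pow_le_pow_left₀ hn this 2

set_option maxHeartbeats 1000000 in
lemma disc_core {k : ℝ} (hk : 1 < k) {r : ℝ} (hr0 : 0 ≤ r) (hr : r < 1) (g : ℂ → ℝ) (hg : Differentiable ℝ g)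
    (hz : ∀ ζ, r ≤ ‖ζ‖ → g ζ = 0) (hE : IntegrableOn (fun ζ => ‖fderiv ℝ g ζ‖ ^ 2) (ball 0 1))
    (hm1 : ∫ ζ in ball 0 1, rho ζ * g ζ ^ 2 = 1)
    (hm2 : ∫ ζ in ball 0 1, Set.indicator {ζ : ℂ | ζ.im ≤ 0} (fun ζ => rho ζ * g ζ ^ 2) ζ = 1 / 2) :
    ∫ ζ in ball 0 1, rho ζ * (g ζ ^ 2 * Real.log (g ζ ^ 2)) ≤
      2 * k * Real.log ((k - 1) / k) + Real.log ((k - 1) / (2 * Real.pi))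
        + (2 * k + 1) / (k * (k - 1)) * ∫ ζ in ball (0 : ℂ) 1, ‖fderiv ℝ g ζ‖ ^ 2 := by
  obtain ⟨R, Θ, hR, hΘ, hΘ2, hbox⟩ := cay_box hr0 hr
  obtain ⟨c, l, G, hc, hl, hG, hK⟩ := params hk
  have hk1 : 0 < k - 1 := by linarith
  have hk0 : 0 < k := by linarith
  set b := (2 * k + 1) / (2 * k * (k - 1)) with hb
  have hbp : 0 < b := by positivity
  set B := Set.Ioc (-R) R ×ℂ Set.Ioc (-Θ) Θ with hBdef
  have hB : MeasurableSet B := box_meas measurableSet_Ioc measurableSet_Ioc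
  have hBs : ∀ w ∈ B, |w.im| < Real.pi / 2 := by
    intro w hw
    have := (Complex.mem_reProdIm.1 hw).2
    rw [abs_lt]; exact ⟨by linarith [this.1], by linarith [this.2]⟩
  classical
  set H : ℂ → ℝ := fun w => if |w.im| < Real.pi / 2 then g (cay w) else 0 with hH
  have hH1 : ∀ w, |w.im| < Real.pi / 2 → H w = g (cay w) := fun w hw => by simp only [hH, if_pos hw]
  have hH0 : ∀ w, H w ≠ 0 → |w.re| < R ∧ |w.im| < Θ := by
    intro w hw
    by_cases h : |w.im| < Real.pi / 2
    · rw [hH1 w h] at hw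
      have h1 : ‖cay w‖ ≤ r := by
        by_contra hc
        push Not at hc
        exact hw (hz _ hc.le)
      have := hbox _ h1
      rwa [cay_log h] at this
    · exact absurd (by simp only [hH, if_neg h]) hw
  have hHd1 : ∀ w, |w.im| < Real.pi / 2 → HasFDerivAt H ((fderiv ℝ g (cay w)).comp
      ((ContinuousLinearMap.toSpanSingleton ℂ (2 * Complex.exp w / (Complex.exp w + 1) ^ 2) : ℂ →L[ℂ] ℂ).restrictScalars ℝ)) w := by
    intro w hw
    have h1 := ((cay_deriv hw).hasFDerivAt.restrictScalars ℝ)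
    have h2 := (hg (cay w)).hasFDerivAt.comp w h1
    apply h2.congr_of_eventuallyEq
    have : IsOpen {w : ℂ | |w.im| < Real.pi / 2} := isOpen_lt (by fun_prop) (by fun_prop)
    filter_upwards [this.mem_nhds hw] with x hx
    exact hH1 x hx
  have hHd : Differentiable ℝ H := by
    intro w
    by_cases h : |w.im| < Real.pi / 2
    · exact (hHd1 w h).differentiableAt
    · have : IsOpen {w : ℂ | Θ < |w.im|} := isOpen_lt (by fun_prop) (by fun_prop)
      have h0 : H =ᶠ[nhds w] fun _ => 0 := by
        filter_upwards [this.mem_nhds (show Θ < |w.im| by push Not at h; linarith)] with x hx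
        by_contra hc
        exact absurd (hH0 x hc).2 (not_lt.2 (le_of_lt hx))
      exact (differentiableAt_const (0:ℝ)).congr_of_eventuallyEq h0
  set F : ℝ → ℝ → ℝ := fun s θ => H (s + θ * Complex.I) with hF
  set Fs : ℝ → ℝ → ℝ := fun s θ => fderiv ℝ H (s + θ * Complex.I) 1 with hFs
  set Ft : ℝ → ℝ → ℝ := fun s θ => fderiv ℝ H (s + θ * Complex.I) Complex.I with hFt
  have hFc : Continuous (Function.uncurry F) := by
    have : Continuous fun z : ℝ × ℝ => (z.1 + z.2 * Complex.I : ℂ) := by fun_prop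
    exact hHd.continuous.comp this
  have hFs' : ∀ s θ, HasDerivAt (fun s => F s θ) (Fs s θ) s := by
    intro s θ
    have h1 : HasDerivAt (fun s : ℝ => (s + θ * Complex.I : ℂ)) 1 s :=
      (Complex.ofRealCLM.hasDerivAt (x := s)).add_const _
    exact (hHd _).hasFDerivAt.comp_hasDerivAt s h1
  have hFt' : ∀ s θ, HasDerivAt (F s) (Ft s θ) θ := by
    intro s θ
    have h1 : HasDerivAt (fun θ : ℝ => (s + θ * Complex.I : ℂ)) Complex.I θ := by
      have := ((Complex.ofRealCLM.hasDerivAt (x := θ)).mul_const Complex.I).const_add (s : ℂ)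
      simpa using this
    exact (hHd _).hasFDerivAt.comp_hasDerivAt θ h1
  have hF0 : ∀ s θ, R ≤ |s| ∨ Θ ≤ |θ| → F s θ = 0 := by
    intro s θ h
    by_contra hc
    have := hH0 _ hc
    simp at this
    rcases h with h | h <;> linarith
  have hen : ∀ w ∈ B, fderiv ℝ H w 1 ^ 2 + fderiv ℝ H w Complex.I ^ 2 ≤ cayD w * ‖fderiv ℝ g (cay w)‖ ^ 2 := by
    intro w hw
    rw [(hHd1 w (hBs w hw)).fderiv]
    have := lin_sq (fderiv ℝ g (cay w)) (2 * Complex.exp w / (Complex.exp w + 1) ^ 2)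
    simp only [ContinuousLinearMap.comp_apply, ContinuousLinearMap.coe_restrictScalars',
      ContinuousLinearMap.toSpanSingleton_apply, smul_eq_mul, one_mul]
    rw [mul_comm Complex.I]
    exact this
  have hZint := cay_cov_int hB hBs _ hE
  have hms : Measurable fun w => fderiv ℝ H w 1 := measurable_fderiv_apply_const ℝ H 1
  have hmt : Measurable fun w => fderiv ℝ H w Complex.I := measurable_fderiv_apply_const ℝ H Complex.I
  have hintS : IntegrableOn (fun w => fderiv ℝ H w 1 ^ 2) B := by
    apply Integrable.mono' hZint (hms.pow_const 2).aestronglyMeasurable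
    filter_upwards [ae_restrict_mem hB] with w hw
    rw [Real.norm_of_nonneg (sq_nonneg _)]
    nlinarith [hen w hw, sq_nonneg (fderiv ℝ H w Complex.I)]
  have hintT : IntegrableOn (fun w => fderiv ℝ H w Complex.I ^ 2) B := by
    apply Integrable.mono' hZint (hmt.pow_const 2).aestronglyMeasurable
    filter_upwards [ae_restrict_mem hB] with w hw
    rw [Real.norm_of_nonneg (sq_nonneg _)]
    nlinarith [hen w hw, sq_nonneg (fderiv ℝ H w 1)]
  have hEle : (∫ w in B, fderiv ℝ H w 1 ^ 2) + (∫ w in B, fderiv ℝ H w Complex.I ^ 2) ≤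
      ∫ ζ in ball 0 1, ‖fderiv ℝ g ζ‖ ^ 2 := by
    rw [← integral_add hintS hintT]
    refine (setIntegral_mono_on (hintS.add hintT) hZint hB hen).trans ?_
    rw [← cay_cov hB hBs (fun ζ => ‖fderiv ℝ g ζ‖ ^ 2)]
    apply setIntegral_mono_set hE (Filter.Eventually.of_forall fun _ => by positivity)
    apply HasSubset.Subset.eventuallyLE
    rintro _ ⟨w, hw, rfl⟩
    simpa using cay_ball (hBs w hw)
  have hdens : ∀ w ∈ B, ∀ y : ℝ, cayD w * (rho (cay w) * y) = y / Real.cos w.im ^ 2 := by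
    intro w hw y
    have := cay_density (hBs w hw)
    rw [← mul_assoc, cayD, rho, this]
    ring
  have e1 : ∫ θ in (-Θ)..Θ, (∫ s in (-R)..R, F s θ ^ 2) / Real.cos θ ^ 2 = 1 := by
    rw [iter_int hR hΘ2 (by linarith) le_rfl F hFc, ← hm1,
      cay_full hΘ2 hbox (fun ζ => rho ζ * g ζ ^ 2) (fun ζ h => by simp [hz ζ h])]
    have := box_int (Set.Ioc (-R) R) (Set.Ioc (-Θ) Θ) measurableSet_Ioc measurableSet_Ioc
      (fun w => H w ^ 2 / Real.cos w.im ^ 2)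
    simp at this
    rw [hF]
    rw [← this]
    apply setIntegral_congr_fun hB
    intro w hw
    simp only
    rw [hdens w hw, hH1 w (hBs w hw)]
  have e2 : ∫ θ in (-Θ)..0, (∫ s in (-R)..R, F s θ ^ 2) / Real.cos θ ^ 2 = 1 / 2 := by
    rw [iter_int hR hΘ2 (by linarith) hΘ.le F hFc, ← hm2,
      cay_full hΘ2 hbox (Set.indicator {ζ : ℂ | ζ.im ≤ 0} (fun ζ => rho ζ * g ζ ^ 2)) (fun ζ h => by simp [Set.indicator, hz ζ h])]
    have := box_int (Set.Ioc (-R) R) (Set.Ioc (-Θ) 0) measurableSet_Ioc measurableSet_Ioc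
      (fun w => H w ^ 2 / Real.cos w.im ^ 2)
    simp at this
    rw [hF]
    rw [← this]
    have hsub : Set.Ioc (-R) R ×ℂ Set.Ioc (-Θ) 0 ⊆ B := by
      intro w hw
      have := Complex.mem_reProdIm.1 hw
      exact Complex.mem_reProdIm.2 ⟨this.1, this.2.1, this.2.2.trans hΘ.le⟩
    rw [setIntegral_eq_of_subset_of_forall_sdiff_eq_zero hB hsub]
    · apply setIntegral_congr_fun (box_meas measurableSet_Ioc measurableSet_Ioc)
      intro w hw
      simp only
      have h0 : (cay w).im ≤ 0 := (cay_im (hBs w (hsub hw))).2 (Complex.mem_reProdIm.1 hw).2.2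
      rw [Set.indicator_of_mem (show cay w ∈ {ζ : ℂ | ζ.im ≤ 0} from h0)]
      rw [hdens w (hsub hw), hH1 w (hBs w (hsub hw))]
    · intro w hw
      have h0 : ¬ (cay w).im ≤ 0 := by
        rw [cay_im (hBs w hw.1)]
        intro h
        apply hw.2
        have := Complex.mem_reProdIm.1 hw.1
        exact Complex.mem_reProdIm.2 ⟨this.1, this.2.1, h⟩
      rw [Set.indicator_of_notMem (show cay w ∉ {ζ : ℂ | ζ.im ≤ 0} from h0)]
      simp
  have hcore := core hbp hc hl hΘ hΘ2 hR hG F Fs Ft hFc hFs' hFt'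
    (fun s => hF0 _ _ (Or.inr (by rw [abs_neg, abs_of_pos hΘ])))
    (fun s => hF0 _ _ (Or.inr (by rw [abs_of_pos hΘ])))
    (fun s => hF0 _ _ (Or.inl (by rw [abs_neg, abs_of_pos hR])))
    (fun s => hF0 _ _ (Or.inl (by rw [abs_of_pos hR])))
    (box_integrable _ _ measurableSet_Ioc measurableSet_Ioc _ hintS)
    (box_integrable _ _ measurableSet_Ioc measurableSet_Ioc _ hintT) e1 e2
  have e3 : ∫ ζ in ball 0 1, rho ζ * (g ζ ^ 2 * Real.log (g ζ ^ 2)) =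
      ∫ z, F z.1 z.2 ^ 2 * Real.log (F z.1 z.2 ^ 2) / Real.cos z.2 ^ 2
        ∂((volume.restrict (Set.Ioc (-R) R)).prod (volume.restrict (Set.Ioc (-Θ) Θ))) := by
    rw [cay_full hΘ2 hbox (fun ζ => rho ζ * (g ζ ^ 2 * Real.log (g ζ ^ 2))) (fun ζ h => by simp [hz ζ h])]
    have := box_int (Set.Ioc (-R) R) (Set.Ioc (-Θ) Θ) measurableSet_Ioc measurableSet_Ioc
      (fun w => H w ^ 2 * Real.log (H w ^ 2) / Real.cos w.im ^ 2)
    simp only [Complex.add_im, Complex.ofReal_im, Complex.mul_im, Complex.ofReal_re, Complex.I_im, mul_one,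
      Complex.I_re, mul_zero, add_zero, zero_add] at this
    rw [hF]
    rw [← this]
    apply setIntegral_congr_fun hB
    intro w hw
    simp only
    rw [hdens w hw, hH1 w (hBs w hw)]
  rw [e3]
  refine hcore.trans ?_
  have e4 := box_int (Set.Ioc (-R) R) (Set.Ioc (-Θ) Θ) measurableSet_Ioc measurableSet_Ioc
    (fun w => fderiv ℝ H w 1 ^ 2)
  have e5 := box_int (Set.Ioc (-R) R) (Set.Ioc (-Θ) Θ) measurableSet_Ioc measurableSet_Ioc
    (fun w => fderiv ℝ H w Complex.I ^ 2)
  rw [← hBdef] at e4 e5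
  simp only [hFs, hFt]
  rw [← e4, ← e5]
  have e6 : (2 * k + 1) / (k * (k - 1)) = 2 * b := by rw [hb]; field_simp
  rw [e6]
  have := mul_le_mul_of_nonneg_left hEle (by positivity : 0 ≤ 2 * b)
  linarith

lemma rho_cont {r : ℝ} (hr : r < 1) {h : ℂ → ℝ} (hh : Continuous h) (hz : ∀ ζ, r ≤ ‖ζ‖ → h ζ = 0) :
    Continuous (fun ζ => rho ζ * h ζ) := by
  rw [continuous_iff_continuousAt]
  intro ζ
  by_cases hζ : ‖ζ‖ < 1
  · apply ContinuousAt.mul _ hh.continuousAt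
    unfold rho
    apply ContinuousAt.mul continuousAt_const
    apply ContinuousAt.inv₀ (by fun_prop)
    have : 0 < 1 - ‖ζ‖ ^ 2 := by nlinarith [norm_nonneg ζ]
    positivity
  · push Not at hζ
    have : IsOpen {w : ℂ | r < ‖w‖} := isOpen_lt (by fun_prop) (by fun_prop)
    have h0 : (fun ζ => rho ζ * h ζ) =ᶠ[nhds ζ] fun _ => 0 := by
      filter_upwards [this.mem_nhds (show r < ‖ζ‖ by linarith)] with x hx
      rw [hz x (le_of_lt hx), mul_zero]
    exact continuousAt_const.congr h0.symm

lemma rho_supp {r : ℝ} {h : ℂ → ℝ} (hz : ∀ ζ, r ≤ ‖ζ‖ → h ζ = 0) :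
    HasCompactSupport (fun ζ => rho ζ * h ζ) := by
  apply HasCompactSupport.intro (isCompact_closedBall (0:ℂ) r)
  intro ζ hζ
  rw [hz ζ (by simp at hζ; exact hζ.le), mul_zero]

lemma rot_int (c : Circle) (h : ℂ → ℝ) : ∫ ζ in ball 0 1, h (c * ζ) = ∫ ζ in ball 0 1, h ζ := by
  have h1 := (rotation c).measurePreserving
  have := h1.setIntegral_preimage_emb (rotation c).toHomeomorph.measurableEmbedding h (ball 0 1)
  have h2 : (rotation c) ⁻¹' (ball 0 1) = ball 0 1 := by
    ext ζ; simp [-LinearIsometryEquiv.preimage_ball, Circle.norm_coe]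
  rw [h2] at this
  simpa using this

lemma rot_integrable (c : Circle) (h : ℂ → ℝ) (hh : IntegrableOn h (ball 0 1)) :
    IntegrableOn (fun ζ => h (c * ζ)) (ball 0 1) := by
  have h1 := (rotation c).measurePreserving
  have := (h1.integrableOn_comp_preimage (rotation c).toHomeomorph.measurableEmbedding (f := h) (s := ball 0 1)).2 hh
  have h2 : (rotation c) ⁻¹' (ball 0 1) = ball 0 1 := by
    ext ζ; simp [-LinearIsometryEquiv.preimage_ball, Circle.norm_coe]
  rw [h2] at this
  simpa [Function.comp_def] using this

lemma im_null : ∀ᵐ ζ : ℂ, ζ.im ≠ 0 := by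
  have h : (volume : Measure ℂ) ((LinearMap.ker Complex.imLm : Submodule ℝ ℂ) : Set ℂ) = 0 := by
    apply Measure.addHaar_submodule
    intro h
    have : Complex.I ∈ (LinearMap.ker Complex.imLm : Submodule ℝ ℂ) := by rw [h]; trivial
    simp at this
  rw [ae_iff]
  convert h using 2
  ext; simp

lemma median {u : ℂ → ℝ} (hu : Continuous u) (hs : HasCompactSupport u) (h1 : ∫ ζ in ball 0 1, u ζ = 1) :
    ∃ c : Circle, ∫ ζ in ball 0 1, Set.indicator {ζ : ℂ | ζ.im ≤ 0} (fun ζ => u (c * ζ)) ζ = 1 / 2 := by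
  obtain ⟨M, hM⟩ := hu.bounded_above_of_compact_support hs
  have hms : MeasurableSet {ζ : ℂ | ζ.im ≤ 0} := measurableSet_le (by fun_prop) (by fun_prop)
  have hms' : MeasurableSet {ζ : ℂ | 0 ≤ ζ.im} := measurableSet_le (by fun_prop) (by fun_prop)
  set N : ℝ → ℝ := fun α => ∫ ζ in ball 0 1, Set.indicator {ζ : ℂ | ζ.im ≤ 0} (fun ζ => u (Circle.exp α * ζ)) ζ with hN
  have hcu : ∀ α : ℝ, Continuous fun ζ : ℂ => u (Circle.exp α * ζ) := fun α => hu.comp (by fun_prop)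
  have hNc : Continuous N := by
    apply continuous_of_dominated (bound := fun _ => M)
    · intro α
      exact ((hcu α).measurable.indicator hms).aestronglyMeasurable
    · intro α
      refine Filter.Eventually.of_forall fun ζ => ?_
      exact (norm_indicator_le_norm_self _ _).trans (hM _)
    · exact integrableOn_const measure_ball_lt_top.ne
    · refine Filter.Eventually.of_forall fun ζ => ?_
      by_cases h : ζ ∈ {ζ : ℂ | ζ.im ≤ 0}
      · simp only [Set.indicator_of_mem h]
        exact hu.comp (by fun_prop)
      · simp only [Set.indicator_of_notMem h]
        exact continuous_const
  have hFint : IntegrableOn u (ball 0 1) := (hu.integrable_of_hasCompactSupport hs).integrableOn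
  have hsum : N 0 + N Real.pi = 1 := by
    have e0 : N 0 = ∫ ζ in ball 0 1, Set.indicator {ζ : ℂ | ζ.im ≤ 0} u ζ := by
      simp [hN]
    have e1 : N Real.pi = ∫ ζ in ball 0 1, Set.indicator {ζ : ℂ | 0 ≤ ζ.im} u ζ := by
      rw [← rot_int (Circle.exp Real.pi)]
      simp only [hN]
      congr 1
      ext ζ
      simp [Set.indicator]
    rw [e0, e1, ← integral_add (hFint.indicator hms) (hFint.indicator hms')]
    refine Eq.trans ?_ h1
    apply integral_congr_ae
    apply ae_restrict_of_ae
    filter_upwards [im_null] with ζ hζ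
    rcases lt_or_gt_of_ne hζ with h | h
    · simp [Set.indicator, h.le, h.not_ge]
    · simp [Set.indicator, h.le, h.not_ge]
  have : (1 / 2 : ℝ) ∈ Set.uIcc (N 0) (N Real.pi) := by
    rw [Set.mem_uIcc]
    rcases le_total (N 0) (1 / 2) with h | h
    · left; constructor <;> linarith
    · right; constructor <;> linarith
  obtain ⟨α, _, hα⟩ := intermediate_value_uIcc hNc.continuousOn this
  exact ⟨Circle.exp α, hα⟩

lemma disc_rot {k : ℝ} (hk : 1 < k) {r : ℝ} (hr0 : 0 ≤ r) (hr : r < 1) (g : ℂ → ℝ) (hg : Differentiable ℝ g)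
    (hz : ∀ ζ, r ≤ ‖ζ‖ → g ζ = 0) (hE : IntegrableOn (fun ζ => ‖fderiv ℝ g ζ‖ ^ 2) (ball 0 1))
    (hm1 : ∫ ζ in ball 0 1, rho ζ * g ζ ^ 2 = 1) :
    ∫ ζ in ball 0 1, rho ζ * (g ζ ^ 2 * Real.log (g ζ ^ 2)) ≤
      2 * k * Real.log ((k - 1) / k) + Real.log ((k - 1) / (2 * Real.pi))
        + (2 * k + 1) / (k * (k - 1)) * ∫ ζ in ball (0 : ℂ) 1, ‖fderiv ℝ g ζ‖ ^ 2 := by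
  have hz2 : ∀ ζ, r ≤ ‖ζ‖ → g ζ ^ 2 = 0 := fun ζ h => by simp [hz ζ h]
  obtain ⟨c, hc⟩ := median (rho_cont hr (hg.continuous.pow 2) hz2) (rho_supp hz2) hm1
  have hrho : ∀ ζ, rho (c * ζ) = rho ζ := fun ζ => by simp [rho, Circle.norm_coe]
  have hfd : ∀ ζ, ‖fderiv ℝ (fun ζ => g (c * ζ)) ζ‖ = ‖fderiv ℝ g (c * ζ)‖ := by
    intro ζ
    have h1 : (fun ζ => g (c * ζ)) = g ∘ (rotation c).toContinuousLinearEquiv := by ext; simp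
    rw [h1, ContinuousLinearEquiv.comp_right_fderiv]
    have := ContinuousLinearMap.opNorm_comp_linearIsometryEquiv (fderiv ℝ g (c * ζ)) (rotation c)
    rw [← this]
    rfl
  have := disc_core hk hr0 hr (fun ζ => g (c * ζ))
    (hg.comp (by fun_prop)) (fun ζ h => hz _ (by simpa [Circle.norm_coe] using h))
    (by simp only [hfd]; exact rot_integrable c _ hE)
    (by
      refine Eq.trans ?_ hm1
      rw [← rot_int c (fun ζ => rho ζ * g ζ ^ 2)]; simp only [hrho])
    (by rw [← hc]; simp only [hrho]; rfl)
  simp only [hfd] at this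
  rw [rot_int c (fun ζ => ‖fderiv ℝ g ζ‖ ^ 2)] at this
  rw [← rot_int c (fun ζ => rho ζ * (g ζ ^ 2 * Real.log (g ζ ^ 2)))]
  simp only [hrho]
  exact this

lemma disc_scale {k : ℝ} (hk : 1 < k) {r : ℝ} (hr0 : 0 ≤ r) (hr : r < 1) (g : ℂ → ℝ) (hg : Differentiable ℝ g)
    (hz : ∀ ζ, r ≤ ‖ζ‖ → g ζ = 0) (hE : IntegrableOn (fun ζ => ‖fderiv ℝ g ζ‖ ^ 2) (ball 0 1))
    {m : ℝ} (hm : 0 < m)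
    (hm1 : ∫ ζ in ball 0 1, rho ζ * g ζ ^ 2 = m) :
    ∫ ζ in ball 0 1, rho ζ * (g ζ ^ 2 * Real.log (g ζ ^ 2)) ≤
      m * Real.log m + m * (2 * k * Real.log ((k - 1) / k) + Real.log ((k - 1) / (2 * Real.pi)))
        + (2 * k + 1) / (k * (k - 1)) * ∫ ζ in ball (0 : ℂ) 1, ‖fderiv ℝ g ζ‖ ^ 2 := by
  have hz2 : ∀ ζ, r ≤ ‖ζ‖ → g ζ ^ 2 = 0 := fun ζ h => by simp [hz ζ h]
  have hz3 : ∀ ζ, r ≤ ‖ζ‖ → g ζ ^ 2 * Real.log (g ζ ^ 2) = 0 := fun ζ h => by simp [hz ζ h]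
  have i1 : IntegrableOn (fun ζ => rho ζ * g ζ ^ 2) (ball 0 1) :=
    ((rho_cont hr (hg.continuous.pow 2) hz2).integrable_of_hasCompactSupport (rho_supp hz2)).integrableOn
  have i2 : IntegrableOn (fun ζ => rho ζ * (g ζ ^ 2 * Real.log (g ζ ^ 2))) (ball 0 1) :=
    ((rho_cont hr (xlogx_cont.comp (hg.continuous.pow 2)) hz3).integrable_of_hasCompactSupport (rho_supp hz3)).integrableOn
  set q := (Real.sqrt m)⁻¹ with hq
  have hq2 : q ^ 2 = m⁻¹ := by rw [hq, inv_pow, Real.sq_sqrt hm.le]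
  have hq0 : 0 < q := by positivity
  have hfd : ∀ ζ, ‖fderiv ℝ (fun ζ => q * g ζ) ζ‖ ^ 2 = m⁻¹ * ‖fderiv ℝ g ζ‖ ^ 2 := by
    intro ζ
    rw [fderiv_const_mul (hg ζ), norm_smul, Real.norm_of_nonneg hq0.le, mul_pow, hq2]
  have := disc_rot hk hr0 hr (fun ζ => q * g ζ) (hg.const_mul q) (fun ζ h => by simp [hz ζ h])
    (by simp only [hfd]; exact hE.const_mul _)
    (by
      have : ∀ ζ, rho ζ * (q * g ζ) ^ 2 = m⁻¹ * (rho ζ * g ζ ^ 2) := fun ζ => by rw [← hq2]; ring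
      simp only [this]
      rw [integral_const_mul, hm1, inv_mul_cancel₀ hm.ne'])
  simp only [hfd] at this
  rw [integral_const_mul] at this
  have e : ∀ ζ, rho ζ * ((q * g ζ) ^ 2 * Real.log ((q * g ζ) ^ 2)) =
      m⁻¹ * (rho ζ * (g ζ ^ 2 * Real.log (g ζ ^ 2))) - m⁻¹ * Real.log m * (rho ζ * g ζ ^ 2) := by
    intro ζ
    rw [mul_pow, hq2]
    by_cases h : g ζ = 0
    · simp [h]
    · rw [Real.log_mul (by positivity) (by positivity), Real.log_inv]; ring
  simp only [e] at this
  rw [integral_sub (i2.const_mul _) (i1.const_mul _), integral_const_mul, integral_const_mul, hm1] at this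
  have h2 := mul_le_mul_of_nonneg_left this hm.le
  have h3 : m * m⁻¹ = 1 := mul_inv_cancel₀ hm.ne'
  set L := ∫ ζ in ball 0 1, rho ζ * (g ζ ^ 2 * Real.log (g ζ ^ 2))
  set E := ∫ ζ in ball (0 : ℂ) 1, ‖fderiv ℝ g ζ‖ ^ 2
  have h4 : m * (m⁻¹ * L - m⁻¹ * Real.log m * m) = L - m * Real.log m := by
    field_simp
  have h5 : ∀ a K : ℝ, m * (K + a * (m⁻¹ * E)) = m * K + a * E := by
    intro a K; field_simp
  rw [h4, h5] at h2
  linarith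

lemma mu_int (h : ℂ → ℝ) : ∫ ζ, h ζ ∂muDisc = ∫ ζ in ball 0 1, rho ζ * h ζ := by
  unfold muDisc
  rw [integral_withDensity_eq_integral_toReal_smul (by fun_prop)
    (Filter.Eventually.of_forall fun _ => ENNReal.ofReal_lt_top)]
  congr 1
  ext ζ
  rw [ENNReal.toReal_ofReal (by positivity), smul_eq_mul, rho]

lemma mu_ball : ∀ᵐ ζ ∂muDisc, ζ ∈ ball (0:ℂ) 1 := by
  unfold muDisc
  exact (withDensity_absolutelyContinuous _ _).ae_le (ae_restrict_mem measurableSet_ball)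

noncomputable def psi (ε s : ℝ) : ℝ := if s ≤ ε then 0 else (s - ε) ^ 2 / s

lemma psi_nonneg {ε : ℝ} (hε : 0 < ε) (s : ℝ) : 0 ≤ psi ε s := by
  unfold psi
  split_ifs with h
  · exact le_rfl
  · push Not at h
    have : 0 < s := by linarith
    positivity

lemma psi_le {ε : ℝ} (hε : 0 < ε) {s : ℝ} (hs : 0 ≤ s) : psi ε s ≤ s := by
  unfold psi
  split_ifs with h
  · exact hs
  · push Not at h
    have : 0 < s := by linarith
    rw [div_le_iff₀ this]
    nlinarith

lemma psi_ge {ε : ℝ} (hε : 0 < ε) {s : ℝ} (hs : 0 ≤ s) : s - 2 * ε ≤ psi ε s := by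
  unfold psi
  split_ifs with h
  · linarith
  · push Not at h
    have : 0 < s := by linarith
    rw [le_div_iff₀ this]
    nlinarith

lemma psi_deriv {ε : ℝ} (hε : 0 < ε) (s : ℝ) : ∃ d : ℝ, |d| ≤ 1 ∧ HasDerivAt (psi ε) d s := by
  rcases lt_trichotomy s ε with h | h | h
  · refine ⟨0, by simp, ?_⟩
    apply (hasDerivAt_const s (0:ℝ)).congr_of_eventuallyEq
    filter_upwards [eventually_lt_nhds h] with x hx
    simp [psi, hx.le]
  · subst h
    refine ⟨0, by simp, ?_⟩
    have : psi s =O[nhds s] fun x => ‖x - s‖ ^ 2 := by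
      apply Asymptotics.IsBigO.of_bound s⁻¹
      refine Filter.Eventually.of_forall fun x => ?_
      rw [Real.norm_of_nonneg (psi_nonneg hε x), norm_pow, norm_norm, Real.norm_eq_abs, sq_abs]
      unfold psi
      split_ifs with h
      · positivity
      · push Not at h
        rw [div_eq_inv_mul]
        gcongr
    have := this.hasFDerivAt (𝕜 := ℝ) one_lt_two
    simpa using this.hasDerivAt
  · have hs : 0 < s := hε.trans h
    refine ⟨1 - ε ^ 2 / s ^ 2, ?_, ?_⟩
    · have h1 : ε ^ 2 / s ^ 2 ≤ 1 := by
        rw [div_le_one (by positivity)]; nlinarith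
      have h2 : 0 ≤ ε ^ 2 / s ^ 2 := by positivity
      rw [abs_le]; constructor <;> linarith
    · have h1 := (((hasDerivAt_id s).sub_const ε).pow 2).div (hasDerivAt_id s) hs.ne'
      refine (h1.congr_deriv ?_).congr_of_eventuallyEq ?_
      · simp
        field_simp
        ring
      · filter_upwards [eventually_gt_nhds h] with x hx
        simp [psi, not_le.2 hx]

lemma psi_log {ε : ℝ} (hε : 0 < ε) {s : ℝ} (hs : 0 ≤ s) :
    |psi ε s ^ 2 * Real.log (psi ε s ^ 2)| ≤ 2 * (s ^ 2 * |Real.log s|) + s ^ 2 := by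
  have h0 := psi_nonneg hε s
  have h1 := psi_le hε hs
  set p := psi ε s
  rcases h0.eq_or_lt with h | h
  · rw [← h]; simp; positivity
  · have hs' : 0 < s := by linarith
    set t := p / s with ht
    have ht0 : 0 < t := by positivity
    have ht1 : t ≤ 1 := by rw [ht, div_le_one hs']; exact h1
    have hp : p = s * t := by rw [ht]; field_simp
    have ht2 : t ^ 2 ≤ 1 := by nlinarith
    have h3 := Real.abs_log_mul_self_lt (t ^ 2) (by positivity) ht2
    rw [hp, mul_pow, Real.log_mul (by positivity) (by positivity), mul_add]
    refine (abs_add_le _ _).trans ?_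
    apply add_le_add
    · rw [abs_mul, abs_of_nonneg (by positivity), Real.log_pow, abs_mul]
      push_cast
      rw [abs_of_pos (two_pos : (0:ℝ) < 2)]
      have : 0 ≤ s ^ 2 * |Real.log s| := by positivity
      nlinarith
    · rw [mul_assoc, abs_mul, abs_of_nonneg (by positivity : 0 ≤ s ^ 2), mul_comm (t ^ 2)]
      nlinarith [sq_nonneg s]

open Classical in
noncomputable def trunc (f : ℂ → ℝ) (ε : ℝ) (ζ : ℂ) : ℝ := if ‖ζ‖ < 1 then psi ε (f ζ) else 0

lemma trunc_spec {f : ℂ → ℝ} (hlim : ∀ ε > 0, ∃ r < 1, ∀ ζ ∈ ball (0 : ℂ) 1, r < ‖ζ‖ → f ζ < ε)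
    (hdiff : ∀ ζ ∈ ball (0 : ℂ) 1, DifferentiableAt ℝ f ζ) {ε : ℝ} (hε : 0 < ε) :
    ∃ r : ℝ, 0 ≤ r ∧ r < 1 ∧ (∀ ζ, r ≤ ‖ζ‖ → trunc f ε ζ = 0) ∧ Differentiable ℝ (trunc f ε) ∧
      ∀ ζ ∈ ball (0:ℂ) 1, ‖fderiv ℝ (trunc f ε) ζ‖ ≤ ‖fderiv ℝ f ζ‖ := by
  obtain ⟨r0, hr0, hr1⟩ := hlim ε hε
  set r := (max r0 0 + 1) / 2 with hr
  have hm : max r0 0 < 1 := max_lt hr0 one_pos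
  have hm0 : 0 ≤ max r0 0 := le_max_right _ _
  have hm1 : r0 ≤ max r0 0 := le_max_left _ _
  have hz : ∀ ζ, r ≤ ‖ζ‖ → trunc f ε ζ = 0 := by
    intro ζ hζ
    unfold trunc
    split_ifs with h
    · have := hr1 ζ (by simpa using h) (by linarith)
      simp [psi, this.le]
    · rfl
  have hin : ∀ ζ, ‖ζ‖ < 1 → ∃ d : ℝ, |d| ≤ 1 ∧ HasFDerivAt (trunc f ε) (d • fderiv ℝ f ζ) ζ := by
    intro ζ hζ
    obtain ⟨d, hd, hd'⟩ := psi_deriv hε (f ζ)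
    refine ⟨d, hd, ?_⟩
    have h1 := hd'.comp_hasFDerivAt ζ (hdiff ζ (by simpa using hζ)).hasFDerivAt
    apply h1.congr_of_eventuallyEq
    have : IsOpen {w : ℂ | ‖w‖ < 1} := isOpen_lt (by fun_prop) (by fun_prop)
    filter_upwards [this.mem_nhds hζ] with x hx
    simp only [trunc, Function.comp]
    exact if_pos hx
  refine ⟨r, by linarith, by linarith, hz, ?_, ?_⟩
  · intro ζ
    by_cases h : ‖ζ‖ < 1
    · obtain ⟨d, _, hd⟩ := hin ζ h
      exact hd.differentiableAt
    · have : IsOpen {w : ℂ | r < ‖w‖} := isOpen_lt (by fun_prop) (by fun_prop)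
      have h0 : trunc f ε =ᶠ[nhds ζ] fun _ => 0 := by
        filter_upwards [this.mem_nhds (show r < ‖ζ‖ by push Not at h; linarith)] with x hx
        exact hz x (le_of_lt hx)
      exact (differentiableAt_const (0:ℝ)).congr_of_eventuallyEq h0
  · intro ζ hζ
    obtain ⟨d, hd, hd'⟩ := hin ζ (by simpa using hζ)
    rw [hd'.fderiv, norm_smul, Real.norm_eq_abs]
    nlinarith [norm_nonneg (fderiv ℝ f ζ)]

/-- A family of logarithmic Sobolev inequalities on the hyperbolic plane
(Theorem 4.1, inequality (3.9)): for `k > 1` and a bounded nonnegative `f` on the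
disc vanishing at the boundary, differentiable with finite Dirichlet energy,
normalized by `∫ f² dμ = 1` and with `∫ f² |ln f| dμ < ∞`,
`∫ f² ln(f²) dμ ≤ 2k·ln((k−1)/k) + ln((k−1)/(2π)) + ((2k+1)/(k(k−1)))·∫ |∇f|² dA`. -/
theorem log_sobolev_family_hyperbolic
    (k : ℝ) (hk : 1 < k)
    (f : ℂ → ℝ)
    (hnn : ∀ ζ ∈ ball (0 : ℂ) 1, 0 ≤ f ζ)
    (hbd : ∃ C, ∀ ζ ∈ ball (0 : ℂ) 1, f ζ ≤ C)
    (hlim : ∀ ε > 0, ∃ r < 1, ∀ ζ ∈ ball (0 : ℂ) 1, r < ‖ζ‖ → f ζ < ε)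
    (hdiff : ∀ ζ ∈ ball (0 : ℂ) 1, DifferentiableAt ℝ f ζ)
    (hgrad : Integrable (fun ζ => ‖fderiv ℝ f ζ‖ ^ 2)
      (volume.restrict (ball (0 : ℂ) 1)))
    (hnorm : ∫ ζ, (f ζ) ^ 2 ∂muDisc = 1)
    (hlog : Integrable (fun ζ => (f ζ) ^ 2 * |Real.log (f ζ)|) muDisc) :
    ∫ ζ, (f ζ) ^ 2 * Real.log ((f ζ) ^ 2) ∂muDisc
      ≤ 2 * k * Real.log ((k - 1) / k) + Real.log ((k - 1) / (2 * Real.pi))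
        + (2 * k + 1) / (k * (k - 1)) *
            ∫ ζ in ball (0 : ℂ) 1, ‖fderiv ℝ f ζ‖ ^ 2 := by
  have hk1 : 0 < k - 1 := by linarith
  have hk0 : 0 < k := by linarith
  have hsq : Integrable (fun ζ => (f ζ) ^ 2) muDisc := by
    by_contra hc
    rw [integral_undef hc] at hnorm
    exact zero_ne_one hnorm
  set e : ℕ → ℝ := fun n => 1 / ((n : ℝ) + 1) with he
  have he0 : ∀ n, 0 < e n := fun n => by positivity
  have het : Filter.Tendsto e Filter.atTop (nhds 0) := tendsto_one_div_add_atTop_nhds_zero_nat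
  set g : ℕ → ℂ → ℝ := fun n => trunc f (e n) with hg
  have hgc : ∀ n, Continuous (g n) := fun n => by
    obtain ⟨r, _, _, _, h, _⟩ := trunc_spec hlim hdiff (he0 n)
    exact h.continuous
  have hgb : ∀ n, ∀ ζ ∈ ball (0:ℂ) 1, g n ζ = psi (e n) (f ζ) := by
    intro n ζ hζ
    exact if_pos (by simpa using hζ)
  have hpt : ∀ ζ ∈ ball (0:ℂ) 1, Filter.Tendsto (fun n => g n ζ) Filter.atTop (nhds (f ζ)) := by
    intro ζ hζ
    have h0 := hnn ζ hζ
    have h1 : Filter.Tendsto (fun n => f ζ - 2 * e n) Filter.atTop (nhds (f ζ)) := by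
      have := (tendsto_const_nhds (x := f ζ)).sub (het.const_mul 2)
      simpa using this
    refine tendsto_of_tendsto_of_tendsto_of_le_of_le h1 tendsto_const_nhds ?_ ?_
    · intro n
      simp only
      rw [hgb n ζ hζ]
      exact psi_ge (he0 n) h0
    · intro n
      simp only
      rw [hgb n ζ hζ]
      exact psi_le (he0 n) h0
  have hM : Filter.Tendsto (fun n => ∫ ζ, g n ζ ^ 2 ∂muDisc) Filter.atTop (nhds 1) := by
    rw [← hnorm]
    apply tendsto_integral_of_dominated_convergence (fun ζ => f ζ ^ 2)
    · intro n; exact ((hgc n).pow 2).aestronglyMeasurable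
    · exact hsq
    · intro n
      filter_upwards [mu_ball] with ζ hζ
      rw [Real.norm_of_nonneg (sq_nonneg _), hgb n ζ hζ]
      exact pow_le_pow_left₀ (psi_nonneg (he0 n) _) (psi_le (he0 n) (hnn ζ hζ)) 2
    · filter_upwards [mu_ball] with ζ hζ
      exact (hpt ζ hζ).pow 2
  have hL : Filter.Tendsto (fun n => ∫ ζ, g n ζ ^ 2 * Real.log (g n ζ ^ 2) ∂muDisc) Filter.atTop
      (nhds (∫ ζ, (f ζ) ^ 2 * Real.log ((f ζ) ^ 2) ∂muDisc)) := by
    apply tendsto_integral_of_dominated_convergence (fun ζ => 2 * (f ζ ^ 2 * |Real.log (f ζ)|) + f ζ ^ 2)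
    · intro n; exact (xlogx_cont.comp ((hgc n).pow 2)).aestronglyMeasurable
    · exact (hlog.const_mul 2).add hsq
    · intro n
      filter_upwards [mu_ball] with ζ hζ
      rw [Real.norm_eq_abs, hgb n ζ hζ]
      exact psi_log (he0 n) (hnn ζ hζ)
    · filter_upwards [mu_ball] with ζ hζ
      exact (xlogx_cont.tendsto _).comp ((hpt ζ hζ).pow 2)
  set K := 2 * k * Real.log ((k - 1) / k) + Real.log ((k - 1) / (2 * Real.pi)) with hK
  have hU : Filter.Tendsto (fun n => (∫ ζ, g n ζ ^ 2 ∂muDisc) * Real.log (∫ ζ, g n ζ ^ 2 ∂muDisc)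
      + (∫ ζ, g n ζ ^ 2 ∂muDisc) * K + (2 * k + 1) / (k * (k - 1)) *
            ∫ ζ in ball (0 : ℂ) 1, ‖fderiv ℝ f ζ‖ ^ 2) Filter.atTop (nhds (K + (2 * k + 1) / (k * (k - 1)) *
            ∫ ζ in ball (0 : ℂ) 1, ‖fderiv ℝ f ζ‖ ^ 2)) := by
    have h1 := (((xlogx_cont.tendsto 1).comp hM).add (hM.mul_const K)).add_const
      ((2 * k + 1) / (k * (k - 1)) * ∫ ζ in ball (0 : ℂ) 1, ‖fderiv ℝ f ζ‖ ^ 2)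
    simpa using h1
  refine le_of_tendsto_of_tendsto hL hU ?_
  filter_upwards [hM.eventually (lt_mem_nhds one_pos)] with n hn
  obtain ⟨r, hr0, hr, hz, hd, hle⟩ := trunc_spec hlim hdiff (he0 n)
  have hEle : ∀ ζ ∈ ball (0:ℂ) 1, ‖fderiv ℝ (g n) ζ‖ ^ 2 ≤ ‖fderiv ℝ f ζ‖ ^ 2 := fun ζ hζ =>
    pow_le_pow_left₀ (norm_nonneg _) (hle ζ hζ) 2
  have hE : IntegrableOn (fun ζ => ‖fderiv ℝ (g n) ζ‖ ^ 2) (ball 0 1) := by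
    apply Integrable.mono' hgrad ((measurable_fderiv ℝ (g n)).norm.pow_const 2).aestronglyMeasurable
    filter_upwards [ae_restrict_mem measurableSet_ball] with ζ hζ
    rw [Real.norm_of_nonneg (by positivity)]
    exact hEle ζ hζ
  have hmain := disc_scale hk hr0 hr (g n) hd hz hE hn (mu_int _).symm
  rw [← mu_int] at hmain
  have hmono := setIntegral_mono_on hE hgrad measurableSet_ball hEle
  have := mul_le_mul_of_nonneg_left hmono (by positivity : 0 ≤ (2 * k + 1) / (k * (k - 1)))
  linarith
end

section
/- A one-parameter family of logarithmic Sobolev inequalities on the hyperbolic plane from Euclidean Sobolev inequalities (Theorem 4.2, inequality (3.12)): Let n ≥ 5 be an integer and set k̃ = (n−2)/2. Let g : H → [0,∞) be a smooth compactly supported function on the upper half-plane with ∫_H g² dμ = 1. Then ∫_H g² ln(g²) dμ ≤ k̃ · ln[ ((k̃−1)/(k̃+1))^{1+1/k̃} · ((2k̃+1)/(2π))^{1/k̃} · (1 + (1/(k̃(k̃−1))) ∫_H (|∂_t g|² + |∂_y g|²) dt dy)^{1+1/k̃} ]. -/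
open MeasureTheory

/-- The hyperbolic area measure `μ = y^{−2} dt dy` on the upper half-plane
`H = {(t,y) : y > 0}`. -/
noncomputable def muUpper : Measure (ℝ × ℝ) :=
  (volume.restrict {p : ℝ × ℝ | 0 < p.2}).withDensity
    (fun p => ENNReal.ofReal ((p.2 ^ 2)⁻¹))


open Set Filter Topology

/-- The truncated Gaussian transport map. -/
lemma exists_transport (f : ℝ → ℝ) (hfc : Continuous f) (hs : HasCompactSupport f)
    (hf0 : ∀ x, 0 ≤ f x) (hm : 0 < ∫ x, f x) (R : ℝ) (hR : 0 < R) :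
    ∃ T : ℝ → ℝ, ∀ x, HasDerivAt T
      ((∫ s in (-R)..R, Real.exp (-(1/2) * s ^ 2)) / (∫ x, f x) * f x
        * Real.exp (1 / 2 * (T x) ^ 2)) x := by
  set Z := ∫ s in (-R)..R, Real.exp (-(1/2) * s ^ 2) with hZ
  set m := ∫ x, f x with hmdef
  set w : ℝ → ℝ := fun s => Real.exp (-(1/2) * (min (s^2) (R^2))) with hw
  have hwc : Continuous w := by fun_prop
  have hwpos : ∀ s, 0 < w s := fun s => Real.exp_pos _
  set G : ℝ → ℝ := fun x => ∫ s in (-R)..x, w s with hG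
  have hGd : ∀ x, HasDerivAt G (w x) x := fun x =>
    intervalIntegral.integral_hasDerivAt_right (hwc.intervalIntegrable _ _)
      (hwc.stronglyMeasurableAtFilter _ _) hwc.continuousAt
  have hGc : Continuous G := continuous_iff_continuousAt.2 fun x => (hGd x).continuousAt
  have hGm : StrictMono G := strictMono_of_deriv_pos fun x => by
    rw [(hGd x).deriv]; exact hwpos x
  set c := Real.exp (-(1/2) * R^2) with hc
  have hcpos : 0 < c := Real.exp_pos _
  have hwge : ∀ s, c ≤ w s := fun s => by
    apply Real.exp_le_exp.2
    have := min_le_right (s^2) (R^2)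
    linarith
  have hlow : ∀ x y, x ≤ y → c * (y - x) ≤ G y - G x := by
    intro x y hxy
    have : Monotone (fun x => G x - c * x) := by
      apply monotone_of_deriv_nonneg
      · intro x
        exact ((hGd x).sub ((hasDerivAt_id x).const_mul c)).differentiableAt
      · intro x
        have := ((hGd x).sub ((hasDerivAt_id x).const_mul c)).deriv
        have h2 := hwge x
        change 0 ≤ deriv (G - fun y => c * id y) x
        rw [this]; linarith
    have := this hxy
    simp only at this
    linarith
  have hGtop : Tendsto G atTop atTop := by
    have h1 : Tendsto (fun x => c * x + G 0) atTop atTop :=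
      tendsto_atTop_add_const_right _ _ (tendsto_id.const_mul_atTop hcpos)
    refine tendsto_atTop_mono' _ ?_ h1
    filter_upwards [eventually_ge_atTop 0] with x hx
    have := hlow 0 x hx
    linarith
  have hGbot : Tendsto G atBot atBot := by
    have h1 : Tendsto (fun x => c * x + G 0) atBot atBot :=
      tendsto_atBot_add_const_right _ _ (tendsto_id.const_mul_atBot hcpos)
    refine tendsto_atBot_mono' _ ?_ h1
    filter_upwards [eventually_le_atBot 0] with x hx
    have := hlow x 0 hx
    linarith
  have hsurj : Function.Surjective G := hGc.surjective hGtop hGbot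
  set e := hGm.orderIsoOfSurjective G hsurj with he
  have hee : ∀ v, G (e.symm v) = v := fun v => e.apply_symm_apply v
  have hee2 : ∀ v, e.symm (G v) = v := fun v => e.symm_apply_apply v
  have hinv : ∀ v, HasDerivAt e.symm (w (e.symm v))⁻¹ v := fun v =>
    (hGd (e.symm v)).of_local_left_inverse e.symm.continuous.continuousAt (hwpos _).ne'
      (Eventually.of_forall hee)
  have hfi : Integrable f := hfc.integrable_of_hasCompactSupport hs
  set F : ℝ → ℝ := fun x => ∫ s in Iic x, f s with hF
  have hFd : ∀ x, HasDerivAt F (f x) x := by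
    intro x
    have h1 : F = fun x => (∫ s in Iic 0, f s) + ∫ s in (0:ℝ)..x, f s := by
      ext y
      have := intervalIntegral.integral_Iic_sub_Iic (hfi.integrableOn (s := Iic 0))
        (hfi.integrableOn (s := Iic y))
      simp only [hF]; linarith
    rw [h1]
    exact (intervalIntegral.integral_hasDerivAt_right (hfc.intervalIntegrable _ _)
      (hfc.stronglyMeasurableAtFilter _ _) hfc.continuousAt).const_add _
  have hF0 : ∀ x, 0 ≤ F x := fun x => integral_nonneg hf0
  have hF1 : ∀ x, F x ≤ m := fun x =>
    setIntegral_le_integral hfi (Eventually.of_forall hf0)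
  have hweq : ∀ s ∈ Icc (-R) R, w s = Real.exp (-(1/2) * s^2) := by
    intro s hs
    simp only [hw]
    rw [min_eq_left]
    exact sq_le_sq' hs.1 hs.2
  have hGR : G R = Z := by
    simp only [hG, hZ]
    apply intervalIntegral.integral_congr
    intro s hs
    rw [uIcc_of_le (by linarith)] at hs
    exact hweq s hs
  have hGR' : G (-R) = 0 := by simp [hG]
  have hZ0 : 0 < Z := by rw [← hGR, ← hGR']; exact hGm (by linarith)
  refine ⟨fun x => e.symm (Z / m * F x), fun x => ?_⟩
  have hmem : e.symm (Z / m * F x) ∈ Icc (-R) R := by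
    constructor
    · rw [← hGm.le_iff_le, hee, hGR']
      have := hF0 x
      positivity
    · rw [← hGm.le_iff_le, hee, hGR]
      rw [div_mul_eq_mul_div, div_le_iff₀ hm]
      exact mul_le_mul_of_nonneg_left (hF1 x) hZ0.le
  have := (hinv (Z / m * F x)).comp x ((hFd x).const_mul (Z/m))
  have h5 : Z / m * f x * Real.exp (1 / 2 * (e.symm (Z / m * F x)) ^ 2)
      = (w (e.symm (Z / m * F x)))⁻¹ * (Z / m * f x) := by
    rw [hweq _ hmem, ← Real.exp_neg, mul_comm]
    congr 2
    ring
  rw [h5]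
  exact this

lemma lsi_R (f f' D : ℝ → ℝ) (hf : ∀ x, HasDerivAt f (f' x) x) (hf'c : Continuous f')
    (hs : HasCompactSupport f)
    (hf0 : ∀ x, 0 ≤ f x) (hm : 0 < ∫ x, f x) (hD0 : ∀ x, 0 ≤ D x) (hDi : Integrable D)
    (hfD : ∀ x, f' x ^ 2 ≤ 4 * f x * D x) (lam : ℝ) (hl : 0 < lam) (R : ℝ) (hR : 0 < R) :
    ∫ x, f x * Real.log (f x) ≤ (∫ x, f x) * Real.log (∫ x, f x)
      + (∫ x, f x) * (Real.log lam - Real.log (∫ s in (-R)..R, Real.exp (-(1/2) * s ^ 2)) - 1)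
      + 2 / lam ^ 2 * ∫ x, D x := by
  have hfc : Continuous f := continuous_iff_continuousAt.2 fun x => (hf x).continuousAt
  obtain ⟨T, hT⟩ := exists_transport f hfc hs hf0 hm R hR
  have hTc : Continuous T := continuous_iff_continuousAt.2 fun x => (hT x).continuousAt
  have hZ : 0 < ∫ s in (-R)..R, Real.exp (-(1/2) * s ^ 2) := by
    apply intervalIntegral.intervalIntegral_pos_of_pos
    · apply Continuous.intervalIntegrable; fun_prop
    · intro x; positivity
    · linarith
  set Z := ∫ s in (-R)..R, Real.exp (-(1/2) * s ^ 2) with hZdef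
  set m := ∫ x, f x with hmdef
  set T' : ℝ → ℝ := fun x => Z / m * f x * Real.exp (1 / 2 * (T x) ^ 2) with hT'
  have hT'c : Continuous T' := by fun_prop
  set W : ℝ → ℝ := fun x => f' x * T x + f x * T' x with hWdef
  have hWd : ∀ x, HasDerivAt (fun x => f x * T x) (W x) x := fun x => (hf x).mul (hT x)
  have hfi : Integrable f := hfc.integrable_of_hasCompactSupport hs
  have hs' : HasCompactSupport f' := by
    have : f' = deriv f := by ext x; exact (hf x).deriv.symm
    rw [this]; exact hs.deriv
  have hWi : Integrable W := by
    apply Continuous.integrable_of_hasCompactSupport (by fun_prop)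
    exact (hs'.mul_right).add hs.mul_right
  have hfTi : Integrable (fun x => f x * T x) :=
    Continuous.integrable_of_hasCompactSupport (by fun_prop) hs.mul_right
  have hW0 : ∫ x, W x = 0 := integral_eq_zero_of_hasDerivAt_of_integrable hWd hWi hfTi
  set A := Real.log m + (Real.log lam - Real.log Z - 1) with hA
  have key : ∀ x, f x * Real.log (f x) ≤ f x * A + (1 / lam * W x + 2 / lam^2 * D x) := by
    intro x
    have hbound : -(f' x * T x / lam) ≤ f x * T x ^ 2 / 2 + 2 / lam^2 * D x := by
      have h0 := hf0 x
      have h1 := hD0 x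
      apply le_of_sq_le_sq _ (by positivity)
      have h2 := mul_le_mul_of_nonneg_right (hfD x) (sq_nonneg (T x / lam))
      have h3 : (-(f' x * T x / lam))^2 = f' x ^ 2 * (T x / lam)^2 := by ring
      have h4 : 4 * f x * D x * (T x / lam)^2 = 4 * (f x * T x ^ 2 / 2) * (2 / lam^2 * D x) := by
        ring
      rw [h3]
      refine h2.trans ?_
      rw [h4]
      nlinarith [sq_nonneg (f x * T x ^ 2 / 2 - 2 / lam^2 * D x)]
    rcases (hf0 x).eq_or_lt with h0 | h0
    · rw [← h0] at hbound ⊢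
      simp only [hWdef, ← h0]
      have : 1 / lam * (f' x * T x + 0 * T' x) = f' x * T x / lam := by ring
      rw [this]; linarith
    · have hT'pos : 0 < T' x := by positivity
      have hlog : Real.log (T' x) = Real.log Z - Real.log m + Real.log (f x) + 1/2 * (T x)^2 := by
        simp only [hT']
        rw [Real.log_mul (by positivity) (by positivity), Real.log_mul (by positivity) (by positivity),
          Real.log_div (by positivity) (by positivity), Real.log_exp]
      have hlog2 : Real.log (T' x) ≤ T' x / lam - 1 + Real.log lam := by
        have := Real.log_le_sub_one_of_pos (div_pos hT'pos hl)
        rw [Real.log_div (by positivity) (by positivity)] at this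
        linarith
      have h3 : Real.log (f x) ≤ A - 1/2 * (T x)^2 + T' x / lam := by
        simp only [hA]; linarith
      have h4 := mul_le_mul_of_nonneg_left h3 h0.le
      simp only [hWdef]
      have : 1 / lam * (f' x * T x + f x * T' x) = f' x * T x / lam + f x * (T' x / lam) := by ring
      rw [this]
      nlinarith
  have hli : Integrable (fun x => f x * Real.log (f x)) := by
    apply Continuous.integrable_of_hasCompactSupport (Real.continuous_mul_log.comp hfc)
    exact hs.mul_right
  have h := integral_mono hli ((hfi.mul_const A).add ((hWi.const_mul (1/lam)).add
    (hDi.const_mul (2/lam^2)))) key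
  have h2 : ∫ x, (f x * A + (1 / lam * W x + 2 / lam^2 * D x)) = m * A + 2 / lam^2 * ∫ x, D x := by
    have e2 : ∫ x, (1 / lam * W x + 2 / lam^2 * D x) = 2 / lam^2 * ∫ x, D x := by
      rw [integral_add (hWi.const_mul (1/lam)) (hDi.const_mul (2/lam^2)),
        integral_const_mul, integral_const_mul, hW0]
      ring
    have e1 : ∫ x, (f x * A + (1 / lam * W x + 2 / lam^2 * D x))
        = (∫ x, f x * A) + ∫ x, (1 / lam * W x + 2 / lam^2 * D x) :=
      integral_add (hfi.mul_const A) ((hWi.const_mul (1/lam)).add (hDi.const_mul (2/lam^2)))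
    rw [e1, e2, integral_mul_const]
  have h3 : ∫ x, f x * Real.log (f x) ≤ m * A + 2 / lam^2 * ∫ x, D x := by
    rw [← h2]; exact h
  simp only [hA] at h3
  linarith

lemma lsi (f f' D : ℝ → ℝ) (hf : ∀ x, HasDerivAt f (f' x) x) (hf'c : Continuous f')
    (hs : HasCompactSupport f)
    (hf0 : ∀ x, 0 ≤ f x) (hD0 : ∀ x, 0 ≤ D x) (hDi : Integrable D)
    (hfD : ∀ x, f' x ^ 2 ≤ 4 * f x * D x) (lam : ℝ) (hl : 0 < lam) :
    ∫ x, f x * Real.log (f x) ≤ (∫ x, f x) * Real.log (∫ x, f x)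
      + (∫ x, f x) * (Real.log lam - Real.log (2 * Real.pi) / 2 - 1)
      + 2 / lam ^ 2 * ∫ x, D x := by
  have hfc : Continuous f := continuous_iff_continuousAt.2 fun x => (hf x).continuousAt
  have hfi : Integrable f := hfc.integrable_of_hasCompactSupport hs
  have hDn : 0 ≤ ∫ x, D x := integral_nonneg hD0
  rcases (integral_nonneg hf0 : 0 ≤ ∫ x, f x).eq_or_lt with h0 | hm
  · have : f =ᵐ[volume] 0 := (integral_eq_zero_iff_of_nonneg hf0 hfi).1 h0.symm
    have h1 : ∫ x, f x * Real.log (f x) = 0 := by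
      apply integral_eq_zero_of_ae
      filter_upwards [this] with x hx
      simp [hx]
    rw [h1, ← h0]
    simp only [zero_mul, zero_add]
    positivity
  · have hg : Integrable (fun s : ℝ => Real.exp (-(1/2) * s ^ 2)) :=
      integrable_exp_neg_mul_sq (by norm_num)
    have h1 := intervalIntegral_tendsto_integral hg tendsto_neg_atTop_atBot (tendsto_id (α := ℝ))
    rw [integral_gaussian] at h1
    have h2 : Tendsto (fun R : ℝ => (∫ x, f x) * Real.log (∫ x, f x)
      + (∫ x, f x) * (Real.log lam - Real.log (∫ s in (-R)..R, Real.exp (-(1/2) * s ^ 2)) - 1)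
      + 2 / lam ^ 2 * ∫ x, D x) atTop (𝓝 ((∫ x, f x) * Real.log (∫ x, f x)
      + (∫ x, f x) * (Real.log lam - Real.log (√(Real.pi / (1/2))) - 1)
      + 2 / lam ^ 2 * ∫ x, D x)) := by
      refine Tendsto.add_const _ (Tendsto.const_add _ (Tendsto.const_mul _ (Tendsto.sub_const
        (Tendsto.const_sub _ (Tendsto.log h1 (by positivity))) _)))
    have h3 : Real.log (√(Real.pi / (1/2))) = Real.log (2 * Real.pi) / 2 := by
      rw [Real.log_sqrt (by positivity)]
      congr 2; ring
    rw [h3] at h2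
    refine ge_of_tendsto h2 ?_
    filter_upwards [eventually_gt_atTop 0] with R hR
    exact lsi_R f f' D hf hf'c hs hf0 hm hD0 hDi hfD lam hl R hR

lemma sq_supp {α : Type*} [TopologicalSpace α] {f : α → ℝ} (hs : HasCompactSupport f) :
    HasCompactSupport (fun z => f z ^ 2) :=
  hs.comp_left (g := fun x : ℝ => x ^ 2) (by simp)

lemma deriv_sq {f : ℝ → ℝ} {f' x : ℝ} (h : HasDerivAt f f' x) :
    HasDerivAt (fun y => f y ^ 2) (2 * f x * f') x := by
  have h1 : HasDerivAt (fun y => f y ^ 2) ((2 : ℕ) * f x ^ (2 - 1) * f') x := h.fun_pow 2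
  have h2 : ((2 : ℕ) * f x ^ (2 - 1) * f') = 2 * f x * f' := by norm_num
  rw [← h2]
  exact h1

lemma exists_box (F : ℝ × ℝ → ℝ) (hs : HasCompactSupport F) :
    ∃ R : ℝ, ∀ t s, (t ∉ Icc (-R) R ∨ s ∉ Icc (-R) R) → F (t, s) = 0 := by
  obtain ⟨R, hR⟩ := hs.isBounded.subset_closedBall (0 : ℝ × ℝ)
  refine ⟨R, fun t s h => ?_⟩
  by_contra hne
  have h1 : (t, s) ∈ Metric.closedBall (0 : ℝ × ℝ) R := hR (subset_tsupport _ hne)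
  rw [mem_closedBall_zero_iff, Prod.norm_def, max_le_iff, Real.norm_eq_abs, Real.norm_eq_abs,
    abs_le, abs_le] at h1
  rcases h with h | h
  · exact h h1.1
  · exact h h1.2

lemma slice_supp (F : ℝ × ℝ → ℝ) (hs : HasCompactSupport F) (s : ℝ) :
    HasCompactSupport (fun t => F (t, s)) := by
  obtain ⟨R, hR⟩ := exists_box F hs
  exact HasCompactSupport.intro isCompact_Icc (K := Icc (-R) R) fun t ht => hR t s (Or.inl ht)

lemma slice_int (F : ℝ × ℝ → ℝ) (hc : Continuous F) (hs : HasCompactSupport F) (s : ℝ) :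
    Integrable (fun t => F (t, s)) :=
  Continuous.integrable_of_hasCompactSupport (by fun_prop) (slice_supp F hs s)

lemma marg_supp (F : ℝ × ℝ → ℝ) (hs : HasCompactSupport F) :
    HasCompactSupport (fun s => ∫ t, F (t, s)) := by
  obtain ⟨R, hR⟩ := exists_box F hs
  refine HasCompactSupport.intro isCompact_Icc (K := Icc (-R) R) fun s h => ?_
  simp [fun t => hR t s (Or.inr h)]

lemma marg_cont (F : ℝ × ℝ → ℝ) (hc : Continuous F) (hs : HasCompactSupport F) :
    Continuous (fun s => ∫ t, F (t, s)) := by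
  obtain ⟨R, hR⟩ := exists_box F hs
  have h1 : (fun s => ∫ t, F (t, s)) = fun s => ∫ t in Icc (-R) R, F (t, s) := by
    ext s
    symm
    apply setIntegral_eq_integral_of_forall_compl_eq_zero
    intro t ht
    exact hR t s (Or.inl ht)
  rw [h1]
  exact continuous_parametric_integral_of_continuous (f := fun s t => F (t, s))
    (by unfold Function.uncurry; fun_prop) isCompact_Icc

lemma marg_int (F : ℝ × ℝ → ℝ) (hc : Continuous F) (hs : HasCompactSupport F) :
    Integrable (fun s => ∫ t, F (t, s)) :=
  (marg_cont F hc hs).integrable_of_hasCompactSupport (marg_supp F hs)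

lemma marg_fubini (F : ℝ × ℝ → ℝ) (hc : Continuous F) (hs : HasCompactSupport F) :
    ∫ z, F z = ∫ s, ∫ t, F (t, s) := by
  have := integral_prod_symm (μ := (volume : Measure ℝ)) (ν := (volume : Measure ℝ)) F
    (hc.integrable_of_hasCompactSupport hs)
  exact this

lemma marg_deriv (F F' : ℝ × ℝ → ℝ) (hc : Continuous F) (hs : HasCompactSupport F)
    (hc' : Continuous F') (hs' : HasCompactSupport F')
    (hd : ∀ t s, HasDerivAt (fun s => F (t, s)) (F' (t, s)) s) (s : ℝ) :
    HasDerivAt (fun s => ∫ t, F (t, s)) (∫ t, F' (t, s)) s := by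
  obtain ⟨R, hR⟩ := exists_box F' hs'
  obtain ⟨C, hC⟩ := hs'.exists_bound_of_continuous hc'
  refine (hasDerivAt_integral_of_dominated_loc_of_deriv_le (F := fun s t => F (t, s))
    (F' := fun s t => F' (t, s)) (s := univ)
    (bound := (Icc (-R) R).indicator fun _ => C) univ_mem ?_ (slice_int F hc hs s) ?_ ?_ ?_ ?_).2
  · exact Eventually.of_forall fun s => (slice_int F hc hs s).aestronglyMeasurable
  · exact (slice_int F' hc' hs' s).aestronglyMeasurable
  · refine Eventually.of_forall fun t x _ => ?_
    by_cases ht : t ∈ Icc (-R) R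
    · rw [indicator_of_mem ht]; exact hC _
    · rw [indicator_of_notMem ht, hR t x (Or.inl ht)]; simp
  · rw [integrable_indicator_iff measurableSet_Icc]
    exact integrableOn_const (by simp)
  · exact Eventually.of_forall fun t x _ => hd t x

lemma cauchy_schwarz (a b : ℝ → ℝ) (ha : Continuous a) (hb : Continuous b)
    (hsa : HasCompactSupport a) (hsb : HasCompactSupport b) :
    (∫ t, 2 * a t * b t) ^ 2 ≤ 4 * (∫ t, a t ^ 2) * ∫ t, b t ^ 2 := by
  have i1 : Integrable (fun t => a t ^ 2) :=
    Continuous.integrable_of_hasCompactSupport (by fun_prop) (sq_supp hsa)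
  have i2 : Integrable (fun t => b t ^ 2) :=
    Continuous.integrable_of_hasCompactSupport (by fun_prop) (sq_supp hsb)
  have i3 : Integrable (fun t => 2 * a t * b t) :=
    Continuous.integrable_of_hasCompactSupport (by fun_prop) hsb.mul_left
  have h : ∀ x : ℝ, 0 ≤ (∫ t, a t ^ 2) * (x * x) + (∫ t, 2 * a t * b t) * x + ∫ t, b t ^ 2 := by
    intro x
    have h1 : 0 ≤ ∫ t, (a t * x + b t) ^ 2 := integral_nonneg fun t => sq_nonneg _
    have h2 : ∫ t, (a t * x + b t) ^ 2
        = ∫ t, ((a t ^ 2 * (x * x) + 2 * a t * b t * x) + b t ^ 2) := by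
      congr 1; ext t; ring
    have h3 : ∫ t, ((a t ^ 2 * (x * x) + 2 * a t * b t * x) + b t ^ 2)
        = (∫ t, (a t ^ 2 * (x * x) + 2 * a t * b t * x)) + ∫ t, b t ^ 2 :=
      integral_add ((i1.mul_const _).add (i3.mul_const _)) i2
    have h4 : ∫ t, (a t ^ 2 * (x * x) + 2 * a t * b t * x)
        = (∫ t, a t ^ 2 * (x * x)) + ∫ t, 2 * a t * b t * x :=
      integral_add (i1.mul_const _) (i3.mul_const _)
    rw [h2, h3, h4, integral_mul_const, integral_mul_const] at h1
    exact h1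
  have := discrim_le_zero h
  unfold discrim at this
  linarith

set_option maxHeartbeats 1000000 in
lemma plane_lsi (u : ℝ × ℝ → ℝ) (hu : ContDiff ℝ 1 u) (hs : HasCompactSupport u)
    (hN : ∫ z, u z ^ 2 = 1) (κ : ℝ) (hκ : 0 < κ) :
    ∫ z, (u z ^ 2 * Real.log (u z ^ 2) + z.2 * u z ^ 2) ≤
      2 * Real.log κ - Real.log (2 * Real.pi) - 2
      + 2 / κ ^ 2 * ∫ z, ((Real.exp z.2 * fderiv ℝ u z (1, 0)) ^ 2 + (fderiv ℝ u z (0, 1)) ^ 2) := by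
  have huc : Continuous u := hu.continuous
  have hfd : Continuous (fderiv ℝ u) := hu.continuous_fderiv one_ne_zero
  have hsf : HasCompactSupport (fderiv ℝ u) := hs.fderiv ℝ
  set a : ℝ × ℝ → ℝ := fun z => fderiv ℝ u z (1, 0) with ha
  set b : ℝ × ℝ → ℝ := fun z => fderiv ℝ u z (0, 1) with hb
  have hac : Continuous a := hfd.clm_apply continuous_const
  have hbc : Continuous b := hfd.clm_apply continuous_const
  have has : HasCompactSupport a :=
    hsf.comp_left (g := fun L : ℝ × ℝ →L[ℝ] ℝ => L (1, 0)) rfl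
  have hbs : HasCompactSupport b :=
    hsf.comp_left (g := fun L : ℝ × ℝ →L[ℝ] ℝ => L (0, 1)) rfl
  have hda : ∀ t s, HasDerivAt (fun t => u (t, s)) (a (t, s)) t := by
    intro t s
    have h1 := (hu.differentiable one_ne_zero (t, s)).hasFDerivAt
    exact h1.comp_hasDerivAt t ((hasDerivAt_id t).prodMk (hasDerivAt_const t s))
  have hdb : ∀ t s, HasDerivAt (fun s => u (t, s)) (b (t, s)) s := by
    intro t s
    have h1 := (hu.differentiable one_ne_zero (t, s)).hasFDerivAt
    exact h1.comp_hasDerivAt s ((hasDerivAt_const s t).prodMk (hasDerivAt_id s))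
  have hsq : HasCompactSupport (fun z => u z ^ 2) := sq_supp hs
  have hbsq : HasCompactSupport (fun z => b z ^ 2) := sq_supp hbs
  have hasq : HasCompactSupport (fun z => a z ^ 2) := sq_supp has
  have hub : HasCompactSupport (fun z => 2 * u z * b z) := hbs.mul_left
  set m : ℝ → ℝ := fun s => ∫ t, u (t, s) ^ 2 with hm
  set B : ℝ → ℝ := fun s => ∫ t, (u (t, s) ^ 2 * Real.log (u (t, s) ^ 2)) with hB
  set A : ℝ → ℝ := fun s => ∫ t, a (t, s) ^ 2 with hA
  set D : ℝ → ℝ := fun s => ∫ t, b (t, s) ^ 2 with hD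
  have hulc : Continuous (fun z => u z ^ 2 * Real.log (u z ^ 2)) :=
    Real.continuous_mul_log.comp (huc.pow 2)
  have huls : HasCompactSupport (fun z => u z ^ 2 * Real.log (u z ^ 2)) := hsq.mul_right
  have hmc : Continuous m := marg_cont _ (huc.pow 2) hsq
  have hms : HasCompactSupport m := marg_supp _ hsq
  have hAc : Continuous A := marg_cont _ (hac.pow 2) hasq
  have hAs : HasCompactSupport A := marg_supp _ hasq
  have hBc : Continuous B := marg_cont _ hulc huls
  have hBs : HasCompactSupport B := marg_supp _ huls
  have hDi : Integrable D := marg_int _ (hbc.pow 2) hbsq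
  have hD0 : ∀ s, 0 ≤ D s := fun s => integral_nonneg fun t => sq_nonneg _
  have hm0 : ∀ s, 0 ≤ m s := fun s => integral_nonneg fun t => sq_nonneg _
  have hmd : ∀ s, HasDerivAt m (∫ t, 2 * u (t, s) * b (t, s)) s :=
    marg_deriv (fun z => u z ^ 2) (fun z => 2 * u z * b z) (huc.pow 2) hsq (by fun_prop) hub
      (fun t s => deriv_sq (hdb t s))
  have hm1 : ∫ s, m s = 1 := by
    rw [← hN]; exact (marg_fubini _ (huc.pow 2) hsq).symm
  have step2 := lsi m _ D hmd (marg_cont _ (by fun_prop) hub) hms hm0 hD0 hDi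
    (fun s => cauchy_schwarz (fun t => u (t, s)) (fun t => b (t, s)) (by fun_prop) (by fun_prop)
      (slice_supp _ hs s) (slice_supp _ hbs s)) κ hκ
  rw [hm1] at step2
  have step1 : ∀ s, B s + s * m s ≤ m s * Real.log (m s)
      + (m s * (Real.log κ - Real.log (2 * Real.pi) / 2 - 1)
      + 2 / κ ^ 2 * ((Real.exp s) ^ 2 * A s)) := by
    intro s
    have := lsi (fun t => u (t, s) ^ 2) (fun t => 2 * u (t, s) * a (t, s)) (fun t => a (t, s) ^ 2)
      (fun t => deriv_sq (hda t s)) (by fun_prop) (slice_supp _ hsq s)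
      (fun t => sq_nonneg _) (fun t => sq_nonneg _) (slice_int _ (hac.pow 2) hasq s)
      (fun t => le_of_eq (by ring)) (κ * Real.exp (-s)) (by positivity)
    rw [Real.log_mul hκ.ne' (Real.exp_pos _).ne', Real.log_exp] at this
    have e1 : 2 / (κ * Real.exp (-s)) ^ 2 = 2 / κ^2 * (Real.exp s)^2 := by
      rw [Real.exp_neg]; field_simp
    rw [e1] at this
    change B s ≤ m s * Real.log (m s) + m s * _ + _ * A s at this
    linarith
  have i0 : Integrable m := hmc.integrable_of_hasCompactSupport hms
  have iB : Integrable B := hBc.integrable_of_hasCompactSupport hBs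
  have is : Integrable (fun s => s * m s) :=
    Continuous.integrable_of_hasCompactSupport (by fun_prop) hms.mul_left
  have il : Integrable (fun s => m s * Real.log (m s)) :=
    (Real.continuous_mul_log.comp hmc).integrable_of_hasCompactSupport hms.mul_right
  have iA : Integrable (fun s => (Real.exp s) ^ 2 * A s) :=
    Continuous.integrable_of_hasCompactSupport (by fun_prop) hAs.mul_left
  have h := integral_mono (iB.add is) (il.add ((i0.mul_const (Real.log κ - Real.log (2 * Real.pi) / 2 - 1)).add
    (iA.const_mul (2 / κ^2)))) step1
  have hL : ∫ z, (u z ^ 2 * Real.log (u z ^ 2) + z.2 * u z ^ 2) = ∫ s, (B s + s * m s) := by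
    have c1 : Continuous (fun z : ℝ × ℝ => z.2 * u z ^ 2) := by fun_prop
    have s1 : HasCompactSupport (fun z : ℝ × ℝ => z.2 * u z ^ 2) := hsq.mul_left
    have c2 : Continuous (fun z : ℝ × ℝ => u z ^ 2 * Real.log (u z ^ 2) + z.2 * u z ^ 2) :=
      hulc.add c1
    have s2 : HasCompactSupport (fun z : ℝ × ℝ => u z ^ 2 * Real.log (u z ^ 2) + z.2 * u z ^ 2) :=
      huls.add s1
    rw [marg_fubini _ c2 s2]
    congr 1
    ext s
    have : ∫ t, (u (t, s) ^ 2 * Real.log (u (t, s) ^ 2) + s * u (t, s) ^ 2)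
      = (∫ t, u (t, s) ^ 2 * Real.log (u (t, s) ^ 2)) + ∫ t, s * u (t, s) ^ 2 :=
      integral_add (slice_int _ hulc huls s) ((slice_int _ (huc.pow 2) hsq s).const_mul s)
    rw [integral_const_mul] at this
    exact this
  have hRr : ∫ z, ((Real.exp z.2 * a z) ^ 2 + b z ^ 2)
      = (∫ s, (Real.exp s) ^ 2 * A s) + ∫ s, D s := by
    have c1 : Continuous (fun z : ℝ × ℝ => (Real.exp z.2 * a z) ^ 2) := by fun_prop
    have s1 : HasCompactSupport (fun z : ℝ × ℝ => (Real.exp z.2 * a z) ^ 2) :=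
      sq_supp (f := fun z : ℝ × ℝ => Real.exp z.2 * a z) has.mul_left
    have s2 : Continuous (fun z => b z ^ 2) := by fun_prop
    rw [integral_add (c1.integrable_of_hasCompactSupport s1)
      (s2.integrable_of_hasCompactSupport hbsq), marg_fubini _ c1 s1, marg_fubini _ s2 hbsq]
    congr 2
    ext s
    simp only [mul_pow, hA]
    rw [integral_const_mul]
  have e3 : ∫ s, (m s * Real.log (m s)
      + (m s * (Real.log κ - Real.log (2 * Real.pi) / 2 - 1)
      + 2 / κ ^ 2 * ((Real.exp s) ^ 2 * A s))) = (∫ s, m s * Real.log (m s))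
      + ((Real.log κ - Real.log (2 * Real.pi) / 2 - 1)
      + 2 / κ ^ 2 * ∫ s, ((Real.exp s) ^ 2 * A s)) := by
    have f1 : ∫ s, (m s * Real.log (m s)
      + (m s * (Real.log κ - Real.log (2 * Real.pi) / 2 - 1)
      + 2 / κ ^ 2 * ((Real.exp s) ^ 2 * A s))) = (∫ s, m s * Real.log (m s)) +
       ∫ s, (m s * (Real.log κ - Real.log (2 * Real.pi) / 2 - 1)
      + 2 / κ ^ 2 * ((Real.exp s) ^ 2 * A s)) :=
      integral_add il ((i0.mul_const _).add (iA.const_mul (2 / κ^2)))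
    rw [f1, integral_add (i0.mul_const _) (iA.const_mul (2 / κ^2)), integral_mul_const,
      integral_const_mul, hm1, one_mul]
  have h' : ∫ s, (B s + s * m s) ≤ (∫ s, m s * Real.log (m s))
      + ((Real.log κ - Real.log (2 * Real.pi) / 2 - 1)
      + 2 / κ ^ 2 * ∫ s, ((Real.exp s) ^ 2 * A s)) := by rw [← e3]; exact h
  rw [hL]
  change _ ≤ _ + 2 / κ^2 * ∫ z, ((Real.exp z.2 * a z) ^ 2 + b z ^ 2)
  rw [hRr]
  simp only [Real.log_one] at step2
  linarith

lemma plane_cross (u : ℝ × ℝ → ℝ) (hu : ContDiff ℝ 1 u) (hs : HasCompactSupport u) :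
    ∫ z, 2 * u z * fderiv ℝ u z (0, 1) = 0 := by
  have huc : Continuous u := hu.continuous
  have hfd : Continuous (fderiv ℝ u) := hu.continuous_fderiv one_ne_zero
  have hsf : HasCompactSupport (fderiv ℝ u) := hs.fderiv ℝ
  have hbc : Continuous (fun z => fderiv ℝ u z (0, 1)) := hfd.clm_apply continuous_const
  have hbs : HasCompactSupport (fun z => fderiv ℝ u z (0, 1)) :=
    hsf.comp_left (g := fun L : ℝ × ℝ →L[ℝ] ℝ => L (0, 1)) rfl
  have hdb : ∀ t s, HasDerivAt (fun s => u (t, s)) (fderiv ℝ u (t, s) (0, 1)) s := by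
    intro t s
    have h1 := (hu.differentiable one_ne_zero (t, s)).hasFDerivAt
    exact h1.comp_hasDerivAt s ((hasDerivAt_const s t).prodMk (hasDerivAt_id s))
  have hsq : HasCompactSupport (fun z => u z ^ 2) := sq_supp hs
  have hub : HasCompactSupport (fun z => 2 * u z * fderiv ℝ u z (0, 1)) := hbs.mul_left
  rw [marg_fubini _ (by fun_prop) hub]
  exact integral_eq_zero_of_hasDerivAt_of_integrable
    (marg_deriv (fun z => u z ^ 2) (fun z => 2 * u z * fderiv ℝ u z (0, 1)) (huc.pow 2) hsq
      (by fun_prop) hub (fun t s => deriv_sq (hdb t s)))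
    (marg_int _ (by fun_prop) hub) (marg_int _ (huc.pow 2) hsq)


lemma phi_nonneg (z : ℝ) (h0 : 0 ≤ z) (h1 : z ≤ 1/3) :
    0 ≤ Real.log (1 - z) + z * Real.log (1 + z) + z := by
  set φ : ℝ → ℝ := fun z => Real.log (1 - z) + z * Real.log (1 + z) + z with hφ
  have hd : ∀ x ∈ Icc (0:ℝ) (1/3), HasDerivAt φ (-1 / (1 - x) + (1 * Real.log (1 + x) + x * (1 / (1 + x))) + 1) x := by
    intro x hx
    have a1 : HasDerivAt (fun x : ℝ => 1 - x) (-1) x := by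
      simpa using (hasDerivAt_id x).const_sub 1
    have a2 : HasDerivAt (fun x : ℝ => 1 + x) 1 x := by
      simpa using (hasDerivAt_id x).const_add 1
    exact ((a1.log (by linarith [hx.2])).add ((hasDerivAt_id x).mul (a2.log (by linarith [hx.1])))).add
      (hasDerivAt_id x)
  have hmono : MonotoneOn φ (Icc 0 (1/3)) := by
    apply monotoneOn_of_deriv_nonneg (convex_Icc _ _)
    · exact fun x hx => (hd x hx).continuousAt.continuousWithinAt
    · exact fun x hx => (hd x (interior_subset hx)).differentiableAt.differentiableWithinAt
    · intro x hx
      have hx' := interior_subset hx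
      rw [(hd x hx').deriv]
      have h3 := Real.le_log_one_add_of_nonneg hx'.1
      have hx0 := hx'.1
      have hx1 := hx'.2
      have h4 : 0 ≤ -1 / (1 - x) + (2 * x / (x + 2) + x * (1 / (1 + x))) + 1 := by
        have e : -1 / (1 - x) + (2 * x / (x + 2) + x * (1 / (1 + x))) + 1
          = x * ((2 * (1 - x) * (1 + x) + (1 - x) * (x + 2) - (x + 2) * (1 + x)))
            / ((1 - x) * (x + 2) * (1 + x)) := by
          have : 1 - x ≠ 0 := by linarith
          have : x + 2 ≠ 0 := by linarith
          have : 1 + x ≠ 0 := by linarith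
          field_simp; ring
        rw [e]
        apply div_nonneg
        · apply mul_nonneg hx0; nlinarith
        · have : 0 < 1 - x := by linarith
          positivity
      linarith
  have := hmono (left_mem_Icc.2 (by norm_num)) ⟨h0, h1⟩ h0
  simpa [hφ] using this

/-- The final one-variable optimisation. -/
lemma numeric (k X : ℝ) (hk : 3/2 ≤ k) (hX : 0 ≤ X) :
    ∃ κ : ℝ, 0 < κ ∧ 2 * Real.log κ - Real.log (2 * Real.pi) - 2 + 2 / κ ^ 2 * X ≤
      k * Real.log (((k - 1) / (k + 1)) ^ (1 + 1 / k)
          * ((2 * k + 1) / (2 * Real.pi)) ^ (1 / k)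
          * (1 + 1 / (k * (k - 1)) * (X + 1/4)) ^ (1 + 1 / k)) := by
  have hk0 : 0 < k := by linarith
  have hk1 : 0 < k - 1 := by linarith
  have hk2 : 0 < k - 1/2 := by linarith
  have hpi := Real.pi_pos
  set w := (k - 1/2)^2 + X with hw
  have hw0 : 0 < w := by positivity
  set c := w / (k + 1) with hc
  have hc0 : 0 < c := by positivity
  refine ⟨√(2 * c), by positivity, ?_⟩
  rw [Real.sq_sqrt (by positivity), Real.log_sqrt (by positivity)]
  have hB : 0 < 1 + 1 / (k * (k - 1)) * (X + 1/4) := by positivity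
  have eR : k * Real.log (((k - 1) / (k + 1)) ^ (1 + 1 / k)
          * ((2 * k + 1) / (2 * Real.pi)) ^ (1 / k)
          * (1 + 1 / (k * (k - 1)) * (X + 1/4)) ^ (1 + 1 / k))
      = (k + 1) * (Real.log w - Real.log k - Real.log (k + 1))
        + (Real.log (2 * k + 1) - Real.log (2 * Real.pi)) := by
    rw [Real.log_mul (by positivity) (by positivity), Real.log_mul (by positivity) (by positivity),
      Real.log_rpow (by positivity), Real.log_rpow (by positivity), Real.log_rpow hB]
    have e1 : 1 + 1 / (k * (k - 1)) * (X + 1/4) = w / (k * (k - 1)) := by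
      rw [hw]; field_simp; ring
    rw [e1, Real.log_div (by positivity) (by positivity), Real.log_div (by positivity) (by positivity),
      Real.log_div (by positivity) (by positivity), Real.log_mul hk0.ne' hk1.ne']
    field_simp
    ring
  rw [eR]
  have ec : Real.log (2 * c) = Real.log 2 + Real.log w - Real.log (k + 1) := by
    rw [hc, Real.log_mul (by positivity) (by positivity), Real.log_div (by positivity) (by positivity)]
    ring
  rw [ec]
  have e2 : 2 / (2 * c) * X = (k + 1) - (k + 1) * (k - 1/2)^2 / w := by
    have : X = w - (k-1/2)^2 := by rw [hw]; ring
    rw [this, hc]; field_simp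
  rw [e2]
  -- tangent line
  set w0 := (k + 1) * (k - 1/2)^2 / k with hw0'
  have hw00 : 0 < w0 := by positivity
  have t1 : 1 - w0 / w ≤ Real.log w - Real.log w0 := by
    have := Real.log_le_sub_one_of_pos (div_pos hw00 hw0)
    rw [Real.log_div (by positivity) (by positivity)] at this
    linarith
  have t2 : Real.log w0 = Real.log (k + 1) + 2 * Real.log (k - 1/2) - Real.log k := by
    rw [hw0', Real.log_div (by positivity) (by positivity), Real.log_mul (by positivity) (by positivity),
      Real.log_pow]
    push_cast; ring
  have t3 := mul_le_mul_of_nonneg_left t1 hk0.le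
  have t4 : k * (1 - w0 / w) = k - (k + 1) * (k - 1/2)^2 / w := by
    rw [hw0']; field_simp
  rw [t4, t2] at t3
  have p := phi_nonneg (1 / (2 * k)) (by positivity) (by
    rw [div_le_iff₀ (by positivity)]; linarith)
  have p1 : Real.log (1 - 1 / (2 * k)) = Real.log (k - 1/2) - Real.log k := by
    rw [← Real.log_div (by positivity) (by positivity)]
    congr 1; field_simp
  have p2 : Real.log (1 + 1 / (2 * k)) = Real.log (2 * k + 1) - Real.log 2 - Real.log k := by
    rw [sub_sub, ← Real.log_mul (by positivity) (by positivity), ← Real.log_div (by positivity) (by positivity)]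
    congr 1; field_simp
  rw [p1, p2] at p
  have p3 := mul_nonneg (by positivity : 0 ≤ 2 * k) p
  have p4 : 2 * k * (Real.log (k - 1/2) - Real.log k + 1 / (2 * k) * (Real.log (2 * k + 1) - Real.log 2 - Real.log k) + 1 / (2 * k))
    = 2 * k * (Real.log (k - 1/2) - Real.log k) + (Real.log (2 * k + 1) - Real.log 2 - Real.log k) + 1 := by
    field_simp
  rw [p4] at p3
  nlinarith

lemma phi_deriv (z : ℝ × ℝ) :
    HasFDerivAt (fun z : ℝ × ℝ => (z.1, Real.exp z.2))
      ((ContinuousLinearMap.id ℝ ℝ).prodMap (Real.exp z.2 • ContinuousLinearMap.id ℝ ℝ)) z := by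
  have h1 : HasFDerivAt (Prod.map (fun t : ℝ => t) Real.exp)
      ((ContinuousLinearMap.id ℝ ℝ).prodMap (Real.exp z.2 • ContinuousLinearMap.id ℝ ℝ)) z := by
    apply HasFDerivAt.prodMap
    · exact hasFDerivAt_id _
    · have := (Real.hasDerivAt_exp z.2).hasFDerivAt
      have e : ContinuousLinearMap.toSpanSingleton ℝ (Real.exp z.2)
          = Real.exp z.2 • ContinuousLinearMap.id ℝ ℝ := by
        apply ContinuousLinearMap.ext
        intro x
        simp [mul_comm]
      rw [e] at this
      exact this
  exact h1

lemma change_var (F : ℝ × ℝ → ℝ) :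
    ∫ z in {p : ℝ × ℝ | 0 < p.2}, F z = ∫ z : ℝ × ℝ, Real.exp z.2 * F (z.1, Real.exp z.2) := by
  have himg : {p : ℝ × ℝ | 0 < p.2} = (fun z : ℝ × ℝ => (z.1, Real.exp z.2)) '' univ := by
    ext p
    simp only [Set.mem_ofPred_eq, image_univ, mem_range, Prod.exists]
    constructor
    · intro hp
      exact ⟨p.1, Real.log p.2, by rw [Real.exp_log hp]⟩
    · rintro ⟨a, b, rfl⟩
      exact Real.exp_pos _
  have hinj : InjOn (fun z : ℝ × ℝ => (z.1, Real.exp z.2)) univ := by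
    intro x _ y _ h
    simp only [Prod.mk.injEq, Real.exp_eq_exp] at h
    exact Prod.ext h.1 h.2
  rw [himg, integral_image_eq_integral_abs_det_fderiv_smul volume MeasurableSet.univ
    (fun z _ => (phi_deriv z).hasFDerivWithinAt) hinj, Measure.restrict_univ]
  congr 1
  ext z
  have : ((ContinuousLinearMap.id ℝ ℝ).prodMap
      (Real.exp z.2 • ContinuousLinearMap.id ℝ ℝ)).det = Real.exp z.2 := by
    have e : (((ContinuousLinearMap.id ℝ ℝ).prodMap
      (Real.exp z.2 • ContinuousLinearMap.id ℝ ℝ) : ℝ × ℝ →L[ℝ] ℝ × ℝ) : ℝ × ℝ →ₗ[ℝ] ℝ × ℝ)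
      = (LinearMap.id : ℝ →ₗ[ℝ] ℝ).prodMap (Real.exp z.2 • (LinearMap.id : ℝ →ₗ[ℝ] ℝ)) := rfl
    rw [ContinuousLinearMap.det, e, LinearMap.det_prodMap]
    simp
  rw [this, abs_of_pos (Real.exp_pos _), smul_eq_mul]

lemma integral_mu (F : ℝ × ℝ → ℝ) :
    ∫ z, F z ∂muUpper = ∫ z : ℝ × ℝ, Real.exp (-z.2) * F (z.1, Real.exp z.2) := by
  unfold muUpper
  rw [integral_withDensity_eq_integral_toReal_smul (by fun_prop)
    (Eventually.of_forall fun _ => ENNReal.ofReal_lt_top), change_var]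
  congr 1
  ext z
  have h : 0 < Real.exp z.2 := Real.exp_pos _
  rw [ENNReal.toReal_ofReal (by positivity), smul_eq_mul, Real.exp_neg]
  field_simp

theorem log_sobolev_from_euclidean_sobolev
    (n : ℕ) (hn : 5 ≤ n) (kt : ℝ) (hkt : kt = ((n : ℝ) - 2) / 2)
    (g : ℝ × ℝ → ℝ)
    (hsmooth : ContDiff ℝ (⊤ : ℕ∞) g)
    (hsupp : HasCompactSupport g)
    (hsuppH : tsupport g ⊆ {p : ℝ × ℝ | 0 < p.2})
    (hnn : ∀ z, 0 ≤ g z)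
    (hnorm : ∫ z, (g z) ^ 2 ∂muUpper = 1) :
    ∫ z, (g z) ^ 2 * Real.log ((g z) ^ 2) ∂muUpper
      ≤ kt * Real.log (((kt - 1) / (kt + 1)) ^ (1 + 1 / kt)
          * ((2 * kt + 1) / (2 * Real.pi)) ^ (1 / kt)
          * (1 + 1 / (kt * (kt - 1)) *
              ∫ z in {p : ℝ × ℝ | 0 < p.2},
                (fderiv ℝ g z (1, 0)) ^ 2 + (fderiv ℝ g z (0, 1)) ^ 2)
            ^ (1 + 1 / kt)) := by
  have hk : 3 / 2 ≤ kt := by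
    have : (5 : ℝ) ≤ n := by exact_mod_cast hn
    rw [hkt]; linarith
  have hg1 : ContDiff ℝ 1 g := hsmooth.of_le (by exact_mod_cast le_top)
  set φ : ℝ × ℝ → ℝ × ℝ := fun z => (z.1, Real.exp z.2) with hφ
  set u : ℝ × ℝ → ℝ := fun z => Real.exp (-z.2 / 2) * g (φ z) with hu
  have hφc : ContDiff ℝ 1 φ := by
    exact contDiff_fst.prodMk (Real.contDiff_exp.comp contDiff_snd)
  have huc : ContDiff ℝ 1 u := by
    apply ContDiff.mul
    · fun_prop
    · exact hg1.comp hφc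
  have hus : HasCompactSupport u := by
    have hK : IsCompact ((fun p : ℝ × ℝ => (p.1, Real.log p.2)) '' tsupport g) := by
      apply IsCompact.image_of_continuousOn hsupp
      apply ContinuousOn.prodMk continuousOn_fst
      apply ContinuousOn.log continuousOn_snd
      intro p hp
      exact (hsuppH hp).ne'
    refine HasCompactSupport.intro hK fun z hz => ?_
    have : g (φ z) = 0 := by
      by_contra hne
      exact hz ⟨φ z, subset_tsupport _ hne, by simp [hφ]⟩
    simp [hu, this]
  have hexp2 : ∀ s : ℝ, Real.exp (-s / 2) ^ 2 = Real.exp (-s) := by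
    intro s; rw [← Real.exp_nat_mul]; congr 1; push_cast; ring
  have husq : ∀ z, u z ^ 2 = Real.exp (-z.2) * g (φ z) ^ 2 := by
    intro z; simp only [hu, mul_pow, hexp2]
  have hN : ∫ z, u z ^ 2 = 1 := by
    rw [← hnorm, integral_mu]
    congr 1; ext z; exact husq z
  have hL : ∫ z, (g z) ^ 2 * Real.log ((g z) ^ 2) ∂muUpper
      = ∫ z, (u z ^ 2 * Real.log (u z ^ 2) + z.2 * u z ^ 2) := by
    rw [integral_mu]
    congr 1; ext z
    change Real.exp (-z.2) * (g (φ z) ^ 2 * Real.log (g (φ z) ^ 2)) = _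
    rw [husq]
    by_cases h0 : g (φ z) = 0
    · simp [h0]
    · rw [Real.log_mul (Real.exp_pos _).ne' (by positivity), Real.log_exp]
      ring
  have hfd : ∀ z, HasFDerivAt u (Real.exp (-z.2 / 2) •
      ((fderiv ℝ g (φ z)).comp ((ContinuousLinearMap.id ℝ ℝ).prodMap
        (Real.exp z.2 • ContinuousLinearMap.id ℝ ℝ)))
      + g (φ z) • ((-(1/2) * Real.exp (-z.2 / 2)) • ContinuousLinearMap.snd ℝ ℝ ℝ)) z := by
    intro z
    have h1 : HasFDerivAt (fun z => g (φ z)) _ z :=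
      ((hg1.differentiable one_ne_zero (φ z)).hasFDerivAt).comp z (phi_deriv z)
    have h2 : HasFDerivAt (fun z : ℝ × ℝ => Real.exp (-z.2 / 2))
        ((-(1/2) * Real.exp (-z.2 / 2)) • ContinuousLinearMap.snd ℝ ℝ ℝ) z := by
      have h3 : HasDerivAt (fun s : ℝ => Real.exp (-s / 2)) (-(1/2) * Real.exp (-z.2 / 2)) z.2 := by
        have h4 : HasDerivAt (fun s : ℝ => -s / 2) (-1 / 2) z.2 :=
          (hasDerivAt_neg z.2).div_const 2
        have h5 : -(1/2) * Real.exp (-z.2 / 2) = Real.exp (-z.2 / 2) * (-1 / 2) := by ring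
        rw [h5]
        exact h4.exp
      exact h3.comp_hasFDerivAt z hasFDerivAt_snd
    exact h2.mul h1
  have hd1 : ∀ z, fderiv ℝ u z (1, 0) = Real.exp (-z.2 / 2) * fderiv ℝ g (φ z) (1, 0) := by
    intro z
    rw [(hfd z).fderiv]
    simp
  have hd2 : ∀ z, fderiv ℝ u z (0, 1) = Real.exp (-z.2 / 2) *
      (Real.exp z.2 * fderiv ℝ g (φ z) (0, 1) - g (φ z) / 2) := by
    intro z
    rw [(hfd z).fderiv]
    have : ((0 : ℝ), Real.exp z.2) = Real.exp z.2 • ((0 : ℝ), (1 : ℝ)) := by simp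
    change Real.exp (-z.2 / 2) * fderiv ℝ g (φ z) (0, Real.exp z.2 * 1)
      + g (φ z) * ((-(1/2) * Real.exp (-z.2 / 2)) * 1) = _
    rw [mul_one, mul_one]
    rw [this, map_smul, smul_eq_mul]
    ring
  set X := ∫ z, ((Real.exp z.2 * fderiv ℝ u z (1, 0)) ^ 2 + (fderiv ℝ u z (0, 1)) ^ 2) with hX
  have hX0 : 0 ≤ X := integral_nonneg fun z => by positivity
  have hfdc : Continuous (fderiv ℝ u) := huc.continuous_fderiv one_ne_zero
  have hsf : HasCompactSupport (fderiv ℝ u) := hus.fderiv ℝ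
  have c0 := huc.continuous
  have hac : Continuous (fun z => fderiv ℝ u z (1, 0)) := hfdc.clm_apply continuous_const
  have hbc : Continuous (fun z => fderiv ℝ u z (0, 1)) := hfdc.clm_apply continuous_const
  have has : HasCompactSupport (fun z => fderiv ℝ u z (1, 0)) :=
    hsf.comp_left (g := fun L : ℝ × ℝ →L[ℝ] ℝ => L (1, 0)) rfl
  have hbs : HasCompactSupport (fun z => fderiv ℝ u z (0, 1)) :=
    hsf.comp_left (g := fun L : ℝ × ℝ →L[ℝ] ℝ => L (0, 1)) rfl
  have i1 : Integrable (fun z : ℝ × ℝ => (Real.exp z.2 * fderiv ℝ u z (1, 0)) ^ 2) :=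
    Continuous.integrable_of_hasCompactSupport (by fun_prop)
      (sq_supp (f := fun z : ℝ × ℝ => Real.exp z.2 * fderiv ℝ u z (1, 0)) has.mul_left)
  have i2 : Integrable (fun z => (fderiv ℝ u z (0, 1)) ^ 2) :=
    Continuous.integrable_of_hasCompactSupport (by fun_prop) (sq_supp hbs)
  have i3 : Integrable (fun z => 2 * u z * fderiv ℝ u z (0, 1)) :=
    Continuous.integrable_of_hasCompactSupport (by fun_prop) hbs.mul_left
  have i4 : Integrable (fun z => u z ^ 2) :=
    Continuous.integrable_of_hasCompactSupport (by fun_prop) (sq_supp hus)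
  have hE : ∫ z in {p : ℝ × ℝ | 0 < p.2},
      ((fderiv ℝ g z (1, 0)) ^ 2 + (fderiv ℝ g z (0, 1)) ^ 2) = X + 1 / 4 := by
    rw [change_var]
    have e1 : ∀ z : ℝ × ℝ, Real.exp z.2 * ((fderiv ℝ g (φ z) (1, 0)) ^ 2
          + (fderiv ℝ g (φ z) (0, 1)) ^ 2)
        = ((Real.exp z.2 * fderiv ℝ u z (1, 0)) ^ 2 + (fderiv ℝ u z (0, 1)) ^ 2)
          + (1 / 2 * (2 * u z * fderiv ℝ u z (0, 1)) + 1 / 4 * u z ^ 2) := by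
      intro z
      rw [hd1, hd2]
      simp only [hu]
      have h5 := hexp2 z.2
      have h6 : Real.exp (-z.2) * Real.exp z.2 = 1 := by rw [← Real.exp_add]; simp
      have h7 : Real.exp (-z.2 / 2) ^ 2 * Real.exp z.2 = 1 := by rw [h5, h6]
      set q := Real.exp (-z.2 / 2)
      set r := Real.exp z.2
      generalize fderiv ℝ g (φ z) (1, 0) = α
      generalize fderiv ℝ g (φ z) (0, 1) = β
      generalize g (φ z) = γ
      linear_combination (-(r * (α ^ 2 + β ^ 2))) * h7
    have e2 : ∫ z : ℝ × ℝ, Real.exp z.2 * ((fderiv ℝ g (φ z) (1, 0)) ^ 2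
          + (fderiv ℝ g (φ z) (0, 1)) ^ 2)
        = ∫ z : ℝ × ℝ, (((Real.exp z.2 * fderiv ℝ u z (1, 0)) ^ 2 + (fderiv ℝ u z (0, 1)) ^ 2)
          + (1 / 2 * (2 * u z * fderiv ℝ u z (0, 1)) + 1 / 4 * u z ^ 2)) := by
      congr 1; ext z; exact e1 z
    have e3 : ∫ z : ℝ × ℝ, (((Real.exp z.2 * fderiv ℝ u z (1, 0)) ^ 2 + (fderiv ℝ u z (0, 1)) ^ 2)
          + (1 / 2 * (2 * u z * fderiv ℝ u z (0, 1)) + 1 / 4 * u z ^ 2))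
        = X + ∫ z : ℝ × ℝ, (1 / 2 * (2 * u z * fderiv ℝ u z (0, 1)) + 1 / 4 * u z ^ 2) :=
      integral_add (i1.add i2) ((i3.const_mul (1/2)).add (i4.const_mul (1/4)))
    have e4 : ∫ z : ℝ × ℝ, (1 / 2 * (2 * u z * fderiv ℝ u z (0, 1)) + 1 / 4 * u z ^ 2)
        = 1 / 4 := by
      rw [integral_add (i3.const_mul (1/2)) (i4.const_mul (1/4)), integral_const_mul,
        integral_const_mul, hN, plane_cross u huc hus]
      norm_num
    rw [e4] at e3
    exact e2.trans e3
  rw [hE, hL]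
  obtain ⟨κ, hκ, h⟩ := numeric kt X hk hX0
  exact (plane_lsi u huc hus hN κ hκ).trans h
end
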